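/- HyperLTL satisfiability restricted to sets of ultimately periodic traces is Σ¹₁-complete: under a fixed computable injective encoding of HyperLTL sentences as natural numbers, the set of codes of HyperLTL sentences that have a model consisting only of ultimately periodic traces is Σ¹₁, and every Σ¹₁ set many-one reduces to it via a total computable function. -/

import Mathlib

/-! ### HyperLTL: syntax and semantics -/

/-- A trace over a set `AP` of atomic propositions. -/
abbrev Trace (AP : Type) : Type := ℕ → Set AP

/-- The suffix of a trace from position `j` onwards. -/
def Trace.shift {AP : Type} (t : Trace AP) (j : ℕ) : Trace AP := fun i => t (i + j)

/-- Quantifier-free HyperLTL formulas; trace variables are natural numbers. -/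
inductive QF (AP : Type) : Type where
  | atom : AP → ℕ → QF AP
  | neg  : QF AP → QF AP
  | disj : QF AP → QF AP → QF AP
  | next : QF AP → QF AP
  | untl : QF AP → QF AP → QF AP

/-- HyperLTL formulas: a block of trace quantifiers followed by a
quantifier-free formula (HyperLTL formulas are in prenex normal form). -/
inductive HFormula (AP : Type) : Type where
  | ex  : ℕ → HFormula AP → HFormula AP
  | all : ℕ → HFormula AP → HFormula AP
  | qf  : QF AP → HFormula AP

/-- The simultaneous shift of a trace assignment. -/
def shiftAsg {AP : Type} (As : ℕ → Trace AP) (j : ℕ) : ℕ → Trace AP :=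
  fun x => Trace.shift (As x) j

/-- Semantics of quantifier-free HyperLTL formulas w.r.t. a trace assignment. -/
def QF.sat {AP : Type} : QF AP → (ℕ → Trace AP) → Prop
  | .atom a x, As => a ∈ As x 0
  | .neg ψ, As => ¬ ψ.sat As
  | .disj ψ₁ ψ₂, As => ψ₁.sat As ∨ ψ₂.sat As
  | .next ψ, As => ψ.sat (shiftAsg As 1)
  | .untl ψ₁ ψ₂, As => ∃ j, ψ₂.sat (shiftAsg As j) ∧ ∀ j' < j, ψ₁.sat (shiftAsg As j')

/-- Semantics of HyperLTL formulas w.r.t. a set of traces and a trace assignment. -/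
def HFormula.sat {AP : Type} : HFormula AP → Set (Trace AP) → (ℕ → Trace AP) → Prop
  | .ex x φ, T, As => ∃ t ∈ T, φ.sat T (Function.update As x t)
  | .all x φ, T, As => ∀ t ∈ T, φ.sat T (Function.update As x t)
  | .qf ψ, _, As => ψ.sat As

def QF.freeVars {AP : Type} : QF AP → Set ℕ
  | .atom _ x => {x}
  | .neg ψ => ψ.freeVars
  | .disj ψ₁ ψ₂ => ψ₁.freeVars ∪ ψ₂.freeVars
  | .next ψ => ψ.freeVars
  | .untl ψ₁ ψ₂ => ψ₁.freeVars ∪ ψ₂.freeVars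

def HFormula.freeVars {AP : Type} : HFormula AP → Set ℕ
  | .ex x φ => φ.freeVars \ {x}
  | .all x φ => φ.freeVars \ {x}
  | .qf ψ => ψ.freeVars

/-- A sentence is a formula without free variables. -/
def HFormula.IsSentence {AP : Type} (φ : HFormula AP) : Prop := φ.freeVars = ∅

/-- `T` is a model of `φ` (for sentences the initial assignment is irrelevant). -/
def HModels {AP : Type} (T : Set (Trace AP)) (φ : HFormula AP) : Prop :=
  φ.sat T (fun _ _ => ∅)

/-- A HyperLTL sentence is satisfiable if it has a model. -/
def HSatisfiable {AP : Type} (φ : HFormula AP) : Prop := ∃ T, HModels T φ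

/-! ### A fixed computable injective encoding of HyperLTL formulas -/

def QF.codeWith {AP : Type} (e : AP → ℕ) : QF AP → ℕ
  | .atom a x => Nat.pair 0 (Nat.pair (e a) x)
  | .neg ψ => Nat.pair 1 (ψ.codeWith e)
  | .disj ψ₁ ψ₂ => Nat.pair 2 (Nat.pair (ψ₁.codeWith e) (ψ₂.codeWith e))
  | .next ψ => Nat.pair 3 (ψ.codeWith e)
  | .untl ψ₁ ψ₂ => Nat.pair 4 (Nat.pair (ψ₁.codeWith e) (ψ₂.codeWith e))

def HFormula.codeWith {AP : Type} (e : AP → ℕ) : HFormula AP → ℕ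
  | .ex x φ => Nat.pair 0 (Nat.pair x (φ.codeWith e))
  | .all x φ => Nat.pair 1 (Nat.pair x (φ.codeWith e))
  | .qf ψ => Nat.pair 2 (ψ.codeWith e)

/-! ### Arithmetic formulas and Σ¹₁ sets -/

/-- Terms of arithmetic (signature 0,1,+,·) with number variables and
applications of (free) type-1 function variables. -/
inductive ATerm : Type where
  | var : ℕ → ATerm
  | zero : ATerm
  | one : ATerm
  | add : ATerm → ATerm → ATerm
  | mul : ATerm → ATerm → ATerm
  | app : ℕ → ATerm → ATerm

def ATerm.eval : ATerm → (ℕ → ℕ) → (ℕ → ℕ → ℕ) → ℕ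
  | .var x, v, _ => v x
  | .zero, _, _ => 0
  | .one, _, _ => 1
  | .add s t, v, F => s.eval v F + t.eval v F
  | .mul s t, v, F => s.eval v F * t.eval v F
  | .app f t, v, F => F f (t.eval v F)

/-- Formulas of arithmetic with arbitrary quantification over natural numbers
(type-0 objects); type-1 function variables occur free, via `ATerm.app`. -/
inductive AForm : Type where
  | eq : ATerm → ATerm → AForm
  | lt : ATerm → ATerm → AForm
  | neg : AForm → AForm
  | disj : AForm → AForm → AForm
  | exN : ℕ → AForm → AForm
  | allN : ℕ → AForm → AForm

def AForm.sat : AForm → (ℕ → ℕ) → (ℕ → ℕ → ℕ) → Prop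
  | .eq s t, v, F => s.eval v F = t.eval v F
  | .lt s t, v, F => s.eval v F < t.eval v F
  | .neg φ, v, F => ¬ φ.sat v F
  | .disj φ ψ, v, F => φ.sat v F ∨ ψ.sat v F
  | .exN x φ, v, F => ∃ n : ℕ, φ.sat (Function.update v x n) F
  | .allN x φ, v, F => ∀ n : ℕ, φ.sat (Function.update v x n) F

/-- A set `N ⊆ ℕ` is Σ¹₁ if it is defined by existential quantification over
type-1 objects (functions ℕ → ℕ) followed by an arithmetic formula with
arbitrary quantification over natural numbers. -/
def Sigma11 (N : Set ℕ) : Prop :=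
  ∃ ψ : AForm, ∀ x : ℕ, x ∈ N ↔ ∃ F : ℕ → ℕ → ℕ, ψ.sat (fun _ => x) F

/-- `A` many-one reduces to `B` via a total computable function. -/
def ManyOneRed (A B : Set ℕ) : Prop :=
  ∃ f : ℕ → ℕ, Computable f ∧ ∀ x, x ∈ A ↔ f x ∈ B

/-- A trace is ultimately periodic. -/
def UltPeriodic {AP : Type} (t : Trace AP) : Prop :=
  ∃ s p : ℕ, 1 ≤ s ∧ 1 ≤ p ∧ ∀ n, s ≤ n → t (n + p) = t n

/-- The set of codes of HyperLTL sentences having a model that consists only of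
ultimately periodic traces. -/
def UPSatCodes : Set ℕ :=
  {n : ℕ | ∃ φ : HFormula ℕ, φ.IsSentence ∧ HFormula.codeWith id φ = n ∧
    ∃ T : Set (Trace ℕ), (∀ t ∈ T, UltPeriodic t) ∧ HModels T φ}

/-!
For hardness, let `ψ` define a `Σ¹₁` set. A trace represents a valuation: for each term `s` of `ψ`
it carries a mark at the position that is the value of `s`, and for each subformula of `ψ` a mark
telling whether it holds. Such a trace is eventually empty, hence ultimately periodic. That the
marks respect arithmetic, the function variables and Tarski's truth definition are conditions on at
most three traces at a time, and that there are enough valuations says that every trace has a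
companion, e.g. one in which `x₀` is larger by one. So a HyperLTL sentence of the shape `∃ ∀∀∀ ∃…∃`
asserts that the function variables of `ψ` can be interpreted so that `ψ` holds at `x`.

For membership, only the finitely many atoms of a sentence matter, and over these there are only
countably many ultimately periodic traces, so a satisfiable sentence has a countable model. Such a
model, together with truth predicates for all formulas, is a tuple of functions on `ℕ` subject to
arithmetic conditions. The assignments needed send all but finitely many variables to the empty
trace, so that they have natural numbers as indices.
-/

/-! ### Quantifier-free HyperLTL -/

variable {AP : Type}

@[simp] theorem shiftAsg_apply (As : ℕ → Trace AP) (i x n : ℕ) :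
    shiftAsg As i x n = As x (n + i) := rfl

@[simp] theorem shiftAsg_zero (As : ℕ → Trace AP) : shiftAsg As 0 = As := rfl

@[simp] theorem shiftAsg_shiftAsg (As : ℕ → Trace AP) (i j : ℕ) :
    shiftAsg (shiftAsg As i) j = shiftAsg As (i + j) := by
  funext x n
  simp only [shiftAsg_apply]
  congr 1
  omega

theorem shiftAsg_comp (As : ℕ → Trace AP) (ρ : ℕ → ℕ) (i : ℕ) :
    shiftAsg (As ∘ ρ) i = shiftAsg As i ∘ ρ := rfl

namespace QF

@[simp] theorem sat_atom (a : AP) (x : ℕ) (As : ℕ → Trace AP) :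
    (atom a x).sat As ↔ a ∈ As x 0 := Iff.rfl

@[simp] theorem sat_neg (q : QF AP) (As : ℕ → Trace AP) : q.neg.sat As ↔ ¬ q.sat As := Iff.rfl

@[simp] theorem sat_disj (q r : QF AP) (As : ℕ → Trace AP) :
    (q.disj r).sat As ↔ q.sat As ∨ r.sat As := Iff.rfl

@[simp] theorem sat_next (q : QF AP) (As : ℕ → Trace AP) :
    q.next.sat As ↔ q.sat (shiftAsg As 1) := Iff.rfl

@[simp] theorem sat_untl (q r : QF AP) (As : ℕ → Trace AP) :
    (q.untl r).sat As ↔ ∃ j, r.sat (shiftAsg As j) ∧ ∀ k < j, q.sat (shiftAsg As k) := Iff.rfl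

theorem codeWith_injective {e : AP → ℕ} (he : e.Injective) : (codeWith e).Injective := by
  intro p
  induction p <;> intro q h <;> cases q <;> simp_all [codeWith, Nat.pair_eq_pair] <;> grind

/-- Conjunction. -/
def and (q r : QF AP) : QF AP := (q.neg.disj r.neg).neg

/-- Implication. -/
def imp (q r : QF AP) : QF AP := q.neg.disj r

/-- Equivalence. -/
def iff (q r : QF AP) : QF AP := (q.imp r).and (r.imp q)

/-- The formula `Xⁿ q`. -/
def nextIter (n : ℕ) (q : QF AP) : QF AP := next^[n] q

@[simp] theorem sat_and (q r : QF AP) (As : ℕ → Trace AP) :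
    (q.and r).sat As ↔ q.sat As ∧ r.sat As := by
  simp [and]

@[simp] theorem sat_imp (q r : QF AP) (As : ℕ → Trace AP) :
    (q.imp r).sat As ↔ (q.sat As → r.sat As) := by
  simp [imp, imp_iff_not_or]

@[simp] theorem sat_iff (q r : QF AP) (As : ℕ → Trace AP) :
    (q.iff r).sat As ↔ (q.sat As ↔ r.sat As) := by
  simp [iff, iff_iff_implies_and_implies]

@[simp] theorem sat_nextIter (n : ℕ) (q : QF AP) (As : ℕ → Trace AP) :
    (q.nextIter n).sat As ↔ q.sat (shiftAsg As n) := by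
  induction n generalizing As with
  | zero => rfl
  | succ n ih =>
    rw [nextIter, Function.iterate_succ_apply', sat_next, ← nextIter, ih, shiftAsg_shiftAsg,
      add_comm]

/-- Renaming of trace variables along a not necessarily injective map. -/
def rename (ρ : ℕ → ℕ) : QF AP → QF AP
  | atom a x => atom a (ρ x)
  | neg q => (q.rename ρ).neg
  | disj q r => (q.rename ρ).disj (r.rename ρ)
  | next q => (q.rename ρ).next
  | untl q r => (q.rename ρ).untl (r.rename ρ)

@[simp] theorem sat_rename (ρ : ℕ → ℕ) (q : QF AP) (As : ℕ → Trace AP) :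
    (q.rename ρ).sat As ↔ q.sat (As ∘ ρ) := by
  induction q generalizing As <;> simp_all [rename, shiftAsg_comp]

theorem freeVars_rename (ρ : ℕ → ℕ) (q : QF AP) : (q.rename ρ).freeVars = ρ '' q.freeVars := by
  induction q <;> simp_all [rename, freeVars, Set.image_union]

theorem rename_nextIter (ρ : ℕ → ℕ) (n : ℕ) (q : QF AP) :
    (q.nextIter n).rename ρ = (q.rename ρ).nextIter n := by
  induction n with
  | zero => rfl
  | succ n ih => simpa only [nextIter, Function.iterate_succ_apply', rename, next.injEq] using ih

theorem primrec_codeWith_and {e : AP → ℕ} {q r : ℕ → QF AP}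
    (hq : Primrec fun x => (q x).codeWith e) (hr : Primrec fun x => (r x).codeWith e) :
    Primrec fun x => ((q x).and (r x)).codeWith e :=
  have neg {f : ℕ → ℕ} (hf : Primrec f) : Primrec fun x => Nat.pair 1 (f x) :=
    Primrec₂.natPair.comp (.const 1) hf
  neg (Primrec₂.natPair.comp (.const 2) (Primrec₂.natPair.comp (neg hq) (neg hr)))

theorem primrec_codeWith_nextIter (e : AP → ℕ) (q : QF AP) :
    Primrec fun x => (q.nextIter x).codeWith e := by
  have hcode (x : ℕ) : (q.nextIter x).codeWith e = (Nat.pair 3)^[x] (q.codeWith e) := by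
    induction x with
    | zero => rfl
    | succ x ih => simpa only [nextIter, Function.iterate_succ_apply', codeWith] using congrArg _ ih
  simp only [hcode]
  exact Primrec.nat_iterate .id (.const _) (Primrec₂.natPair.comp (.const 3) .snd)

@[simp] theorem freeVars_and (q r : QF AP) : (q.and r).freeVars = q.freeVars ∪ r.freeVars := rfl

section Inhabited

variable [Inhabited AP]

/-- The valid formula; the atom in it is irrelevant. -/
def top : QF AP := (atom default 0).disj (atom default 0).neg

/-- The formula `F q`. -/
def eventually (q : QF AP) : QF AP := top.untl q

/-- The conjunction of a list of formulas. -/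
def all (l : List (QF AP)) : QF AP := l.foldr and top

@[simp] theorem sat_top (As : ℕ → Trace AP) : (top : QF AP).sat As := em _

@[simp] theorem sat_eventually (q : QF AP) (As : ℕ → Trace AP) :
    q.eventually.sat As ↔ ∃ j, q.sat (shiftAsg As j) := by
  simp [eventually]

@[simp] theorem sat_all (l : List (QF AP)) (As : ℕ → Trace AP) :
    (all l).sat As ↔ ∀ q ∈ l, q.sat As := by
  induction l <;> simp_all [all]

theorem freeVars_all_subset {l : List (QF AP)} {V : Set ℕ} (h0 : 0 ∈ V)
    (h : ∀ q ∈ l, q.freeVars ⊆ V) : (all l).freeVars ⊆ V := by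
  induction l with
  | nil => simpa [all, top, freeVars] using h0
  | cons q l ih =>
    exact Set.union_subset (h q List.mem_cons_self) (ih fun r hr => h r (List.mem_cons_of_mem _ hr))

end Inhabited

end QF

/-! ### Prenex sentences of the shape `∃ ∀∀∀ ∃…∃` -/

/-- The assignment `0 ↦ a` and `x ↦ d` for all other `x`. -/
def assign₂ {ι : Type*} (a d : ι) : ℕ → ι
  | 0 => a
  | _ => d

/-- The assignment `0 ↦ z`, `1 ↦ a`, `2 ↦ b` and `x ↦ c` for all other `x`. -/
def assign₄ {ι : Type*} (z a b c : ι) : ℕ → ι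
  | 0 => z
  | 1 => a
  | 2 => b
  | _ => c

namespace HFormula

theorem codeWith_injective {e : AP → ℕ} (he : e.Injective) :
    (codeWith e : HFormula AP → ℕ).Injective := by
  intro p
  induction p <;> intro q h <;> cases q <;>
    simp_all [codeWith, Nat.pair_eq_pair, (QF.codeWith_injective he).eq_iff] <;> grind

/-- The formula `∃ k, …, ∃ k + n - 1, q`. -/
def exBlock (k : ℕ) : ℕ → QF AP → HFormula AP
  | 0, q => qf q
  | n + 1, q => ex k (exBlock (k + 1) n q)

theorem freeVars_exBlock (k n : ℕ) (q : QF AP) :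
    (exBlock k n q).freeVars = q.freeVars \ Set.Ico k (k + n) := by
  induction n generalizing k with
  | zero => simp [exBlock, freeVars]
  | succ n ih =>
    ext x
    simp only [exBlock, freeVars, ih, Set.mem_sdiff, Set.mem_Ico, Set.mem_singleton_iff]
    grind

theorem sat_exBlock (T : Set (Trace AP)) (k n : ℕ) (q : QF AP) (As : ℕ → Trace AP) :
    (exBlock k n q).sat T As ↔ ∃ Bs : ℕ → Trace AP, Set.EqOn Bs As (Set.Ico k (k + n))ᶜ ∧
      Set.MapsTo Bs (Set.Ico k (k + n)) T ∧ q.sat Bs := by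
  induction n generalizing k As with
  | zero =>
    simp only [exBlock, sat, add_zero, Set.Ico_self, Set.compl_empty, Set.eqOn_univ]
    exact ⟨fun h => ⟨As, rfl, Set.mapsTo_empty _ _, h⟩, fun ⟨_, hB, _, h⟩ => hB ▸ h⟩
  | succ n ih =>
    simp only [exBlock, sat, ih]
    constructor
    · rintro ⟨t, ht, Bs, hB, hT, hq⟩
      have hk : Bs k = t := by simpa using hB (x := k) (by simp)
      refine ⟨Bs, fun x hx => ?_, fun x hx => ?_, hq⟩
      · have hxk : x ≠ k := by grind
        simpa [hxk] using hB (x := x) (by grind)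
      · rcases eq_or_ne x k with rfl | hxk
        · exact hk ▸ ht
        · exact hT (by grind)
    · rintro ⟨Bs, hB, hT, hq⟩
      refine ⟨Bs k, hT (by simp), Bs, fun x hx => ?_, fun x hx => hT (by grind), hq⟩
      rcases eq_or_ne x k with rfl | hxk
      · simp
      · simpa [hxk] using hB (x := x) (by grind)

theorem primrec_codeWith_exBlock {e : AP → ℕ} {q : ℕ → QF AP}
    (hq : Primrec fun x => (q x).codeWith e) (k n : ℕ) :
    Primrec fun x => (exBlock k n (q x)).codeWith e := by
  induction n generalizing k with
  | zero => exact Primrec₂.natPair.comp (.const 2) hq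
  | succ n ih =>
    exact Primrec₂.natPair.comp (.const 0) (Primrec₂.natPair.comp (.const k) (ih (k + 1)))

section Sentence

variable [Inhabited AP]

/-- The matrix of `axiomSentence`. -/
def axiomMatrix (U : QF AP) (W : List (QF AP)) : QF AP :=
  (U.rename (min · 3)).and
    (QF.all (W.mapIdx fun i C => C.rename fun x => if x = 0 then 1 else 4 + i))

/-- A sentence `∃0 ∀1 ∀2 ∀3 ∃4 ∃5 …` saying that some trace satisfies `U` together with any three
traces, and that for every `C ∈ W` each trace has a companion satisfying `C` with it. In `U` the
four traces are the variables `0, 1, 2` and any other; in `C` the trace is `0` and its companion is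
any other variable. -/
def axiomSentence (U : QF AP) (W : List (QF AP)) : HFormula AP :=
  ex 0 (all 1 (all 2 (all 3 (exBlock 4 W.length (axiomMatrix U W)))))

theorem freeVars_axiomMatrix_subset (U : QF AP) (W : List (QF AP)) :
    (axiomMatrix U W).freeVars ⊆ Set.Iio (4 + W.length) := by
  rw [axiomMatrix, QF.freeVars_and]
  refine Set.union_subset ?_ (QF.freeVars_all_subset (by simp) fun q hq => ?_)
  · rw [QF.freeVars_rename]
    rintro _ ⟨x, -, rfl⟩
    simp only [Set.mem_Iio]
    omega
  · obtain ⟨i, hi, rfl⟩ := List.mem_mapIdx.mp hq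
    rw [QF.freeVars_rename]
    rintro _ ⟨x, -, rfl⟩
    simp only [Set.mem_Iio]
    split <;> omega

theorem isSentence_axiomSentence (U : QF AP) (W : List (QF AP)) :
    (axiomSentence U W).IsSentence := by
  simp only [IsSentence, axiomSentence, freeVars, freeVars_exBlock]
  ext x
  have hx := @freeVars_axiomMatrix_subset _ _ U W x
  simp only [Set.mem_Iio] at hx
  simp only [Set.mem_sdiff, Set.mem_Ico, Set.mem_singleton_iff, Set.mem_empty_iff_false]
  grind

theorem sat_axiomMatrix (U : QF AP) (W : List (QF AP)) (As : ℕ → Trace AP) :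
    (axiomMatrix U W).sat As ↔ U.sat (assign₄ (As 0) (As 1) (As 2) (As 3)) ∧
      ∀ i (hi : i < W.length), W[i].sat (assign₂ (As 1) (As (4 + i))) := by
  have hU : As ∘ (min · 3) = assign₄ (As 0) (As 1) (As 2) (As 3) := by
    funext x
    match x with
    | 0 | 1 | 2 | _ + 3 => simp [assign₄]
  have hW (i : ℕ) : (As ∘ fun x => if x = 0 then 1 else 4 + i) = assign₂ (As 1) (As (4 + i)) := by
    funext x
    match x with
    | 0 | _ + 1 => rfl
  simp only [axiomMatrix, QF.sat_and, QF.sat_rename, hU, QF.sat_all, List.mem_mapIdx]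
  refine and_congr_right fun _ => ⟨fun h i hi => ?_, ?_⟩
  · simpa [hW] using h _ ⟨i, hi, rfl⟩
  · rintro h _ ⟨i, hi, rfl⟩
    simpa [hW] using h i hi

theorem sat_exBlock_axiomMatrix {ι : Type*} (tr : ι → Trace AP) (U : QF AP) (W : List (QF AP))
    (As : ℕ → Trace AP) :
    (exBlock 4 W.length (axiomMatrix U W)).sat (Set.range tr) As ↔
      U.sat (assign₄ (As 0) (As 1) (As 2) (As 3)) ∧
        ∀ C ∈ W, ∃ d, C.sat (assign₂ (As 1) (tr d)) := by
  simp only [sat_exBlock, sat_axiomMatrix]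
  constructor
  · rintro ⟨Bs, hB, hT, hU, hW⟩
    have hlow : ∀ x < 4, Bs x = As x := fun x hx => hB (by grind)
    simp only [hlow _ (show 0 < 4 by simp), hlow _ (show 1 < 4 by simp),
      hlow _ (show 2 < 4 by simp), hlow _ (show 3 < 4 by simp)] at hU hW
    refine ⟨hU, fun C hC => ?_⟩
    obtain ⟨i, hi, rfl⟩ := List.mem_iff_getElem.mp hC
    obtain ⟨d, hd⟩ := hT (x := 4 + i) (by grind)
    exact ⟨d, by simpa only [hd] using hW i hi⟩
  · rintro ⟨hU, hW⟩
    choose d hd using fun i (hi : i < W.length) => hW W[i] (List.getElem_mem hi)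
    let Bs : ℕ → Trace AP := fun x =>
      if h : 4 ≤ x ∧ x - 4 < W.length then tr (d (x - 4) h.2) else As x
    have hlow : ∀ x < 4, Bs x = As x := fun x hx => dif_neg (by omega)
    have hhigh : ∀ i (hi : i < W.length), Bs (4 + i) = tr (d i hi) := fun i hi => by
      simp [Bs, hi]
    refine ⟨Bs, fun x hx => dif_neg (by grind), fun x hx => ?_, ?_, fun i hi => ?_⟩
    · obtain ⟨i, rfl⟩ := Nat.exists_eq_add_of_le hx.1
      rw [hhigh i (by grind)]
      exact Set.mem_range_self _
    · simpa [hlow] using hU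
    · simpa only [hlow 1 (by simp), hhigh i hi] using hd i hi

theorem hModels_axiomSentence {ι : Type*} (tr : ι → Trace AP) (U : QF AP) (W : List (QF AP)) :
    HModels (Set.range tr) (axiomSentence U W) ↔ ∃ z,
      (∀ a b c, U.sat (tr ∘ assign₄ z a b c)) ∧
      ∀ a, ∀ C ∈ W, ∃ d, C.sat (tr ∘ assign₂ a d) := by
  have comp_assign₂ (a d : ι) : tr ∘ assign₂ a d = assign₂ (tr a) (tr d) := by
    funext x
    match x with
    | 0 | _ + 1 => rfl
  have comp_assign₄ (z a b c : ι) :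
      tr ∘ assign₄ z a b c = assign₄ (tr z) (tr a) (tr b) (tr c) := by
    funext x
    match x with
    | 0 | 1 | 2 | _ + 3 => rfl
  simp only [HModels, axiomSentence, sat, Set.exists_range_iff, Set.forall_mem_range,
    sat_exBlock_axiomMatrix, comp_assign₂, comp_assign₄]
  refine exists_congr fun z => ?_
  exact ⟨fun h => ⟨fun a b c => by simpa using (h a b c).1, fun a => by simpa using (h a a a).2⟩,
    fun h a b c => by simpa using ⟨h.1 a b c, h.2 a⟩⟩

theorem primrec_codeWith_axiomSentence {e : AP → ℕ} {U : ℕ → QF AP}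
    (hU : Primrec fun x => ((U x).rename (min · 3)).codeWith e) (W : List (QF AP)) :
    Primrec fun x => (axiomSentence (U x) W).codeWith e :=
  have quantifier (i k : ℕ) {f : ℕ → ℕ} (hf : Primrec f) :
      Primrec fun x => Nat.pair i (Nat.pair k (f x)) :=
    Primrec₂.natPair.comp (.const i) (Primrec₂.natPair.comp (.const k) hf)
  quantifier 0 0 (quantifier 1 1 (quantifier 1 2 (quantifier 1 3
    (primrec_codeWith_exBlock (QF.primrec_codeWith_and hU (.const _)) _ _))))

end Sentence

end HFormula

/-! ### Finite fragments of arithmetic -/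

namespace ATerm

/-- Gödel numbering of terms. -/
def code : ATerm → ℕ
  | var x => Nat.pair 0 x
  | zero => Nat.pair 1 0
  | one => Nat.pair 2 0
  | add s t => Nat.pair 3 (Nat.pair s.code t.code)
  | mul s t => Nat.pair 4 (Nat.pair s.code t.code)
  | app f s => Nat.pair 5 (Nat.pair f s.code)

theorem code_injective : code.Injective := by
  intro s
  induction s <;> intro t h <;> cases t <;> simp_all [code, Nat.pair_eq_pair] <;> grind

/-- The immediate subterms of a term. -/
def args : ATerm → List ATerm
  | add s t | mul s t => [s, t]
  | app _ s => [s]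
  | _ => []

/-- All subterms of a term, including the term itself. -/
def subterms : ATerm → List ATerm
  | add s t => add s t :: (s.subterms ++ t.subterms)
  | mul s t => mul s t :: (s.subterms ++ t.subterms)
  | app f s => app f s :: s.subterms
  | s => [s]

theorem self_mem_subterms (s : ATerm) : s ∈ s.subterms := by
  cases s <;> simp [subterms]

theorem args_subset_subterms {s u : ATerm} (h : u ∈ s.subterms) : u.args ⊆ s.subterms := by
  induction s <;> simp_all [subterms, args] <;> grind [args, self_mem_subterms]

end ATerm

namespace AForm

/-- Gödel numbering of formulas. -/
def code : AForm → ℕ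
  | eq s t => Nat.pair 0 (Nat.pair s.code t.code)
  | lt s t => Nat.pair 1 (Nat.pair s.code t.code)
  | neg φ => Nat.pair 2 φ.code
  | disj φ χ => Nat.pair 3 (Nat.pair φ.code χ.code)
  | exN x φ => Nat.pair 4 (Nat.pair x φ.code)
  | allN x φ => Nat.pair 5 (Nat.pair x φ.code)

theorem code_injective : code.Injective := by
  intro φ
  induction φ <;> intro χ h <;> cases χ <;>
    simp_all [code, Nat.pair_eq_pair, ATerm.code_injective.eq_iff] <;> grind

/-- The terms compared by an atomic formula, resp. the variable bound by a quantifier. -/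
def args : AForm → List ATerm
  | eq s t | lt s t => [s, t]
  | exN j _ | allN j _ => [.var j]
  | _ => []

/-- The immediate subformulas of a formula. -/
def children : AForm → List AForm
  | neg φ | exN _ φ | allN _ φ => [φ]
  | disj φ χ => [φ, χ]
  | _ => []

/-- All subformulas of a formula, including the formula itself. -/
def subformulas : AForm → List AForm
  | neg φ => neg φ :: φ.subformulas
  | disj φ χ => disj φ χ :: (φ.subformulas ++ χ.subformulas)
  | exN j φ => exN j φ :: φ.subformulas
  | allN j φ => allN j φ :: φ.subformulas
  | φ => [φ]

theorem self_mem_subformulas (φ : AForm) : φ ∈ φ.subformulas := by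
  cases φ <;> simp [subformulas]

theorem children_subset_subformulas {φ χ : AForm} (h : χ ∈ φ.subformulas) :
    χ.children ⊆ φ.subformulas := by
  induction φ <;> simp_all [subformulas, children] <;>
    grind [children, self_mem_subformulas]

end AForm

/-- The term `x₀ + x₁`. On the traces of a model of the reduction, the marks of `x₀`, `x₁` and
`x₀ + x₁` tabulate the graph of addition. -/
def sumTerm : ATerm := .add (.var 0) (.var 1)

/-- The term `x₀ * x₁`, which plays the same role for multiplication. -/
def prodTerm : ATerm := .mul (.var 0) (.var 1)

/-- A finite set of terms and formulas that is closed under immediate constituents and contains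
`x₀ + x₁` and `x₀ * x₁`. -/
structure IsFragment (S : List ATerm) (P : List AForm) : Prop where
  args_term : ∀ s ∈ S, s.args ⊆ S
  args_form : ∀ φ ∈ P, φ.args ⊆ S
  children : ∀ φ ∈ P, φ.children ⊆ P
  sum_mem : sumTerm ∈ S
  prod_mem : prodTerm ∈ S

/-- The terms of the fragment generated by a formula. -/
def AForm.terms (ψ : AForm) : List ATerm :=
  sumTerm.subterms ++ prodTerm.subterms ++
    ψ.subformulas.flatMap fun φ => φ.args.flatMap ATerm.subterms

theorem AForm.isFragment (ψ : AForm) : IsFragment ψ.terms ψ.subformulas where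
  args_term s hs := by
    simp only [terms, List.mem_append, List.mem_flatMap] at hs
    intro u hu
    simp only [terms, List.mem_append, List.mem_flatMap]
    rcases hs with (hs | hs) | ⟨φ, hφ, t, ht, hs⟩
    · exact .inl (.inl (ATerm.args_subset_subterms hs hu))
    · exact .inl (.inr (ATerm.args_subset_subterms hs hu))
    · exact .inr ⟨φ, hφ, t, ht, ATerm.args_subset_subterms hs hu⟩
  args_form φ hφ s hs := by
    simp only [terms, List.mem_append, List.mem_flatMap]
    exact .inr ⟨φ, hφ, s, hs, s.self_mem_subterms⟩
  children _ := AForm.children_subset_subformulas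
  sum_mem := by simp [terms, ATerm.self_mem_subterms]
  prod_mem := by simp [terms, ATerm.self_mem_subterms]

namespace IsFragment

variable {S : List ATerm} {P : List AForm} (hSP : IsFragment S P)

include hSP

theorem var_zero_mem : .var 0 ∈ S := hSP.args_term _ hSP.sum_mem (by simp [sumTerm, ATerm.args])

theorem var_one_mem : .var 1 ∈ S := hSP.args_term _ hSP.sum_mem (by simp [sumTerm, ATerm.args])

end IsFragment

/-! ### Systems of valuations -/

section ValuationSystem

variable {ι : Type*} (S : List ATerm) (val : ι → ATerm → ℕ) (tru : ι → AForm → Prop)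

/-- The valuations `a` and `b` agree on all variables in `S` except possibly `j`. -/
def AgreeOff (j : ℕ) (a b : ι) : Prop :=
  ∀ k, .var k ∈ S → k ≠ j → val a (.var k) = val b (.var k)

/-- Values of terms with the same head and equal arguments are equal. -/
def TermSpec (a b : ι) : ATerm → ATerm → Prop
  | .zero, _ => val a .zero = 0
  | .one, _ => val a .one = 1
  | .add s t, .add s' t' =>
    val a s = val b s' → val a t = val b t' → val a (.add s t) = val b (.add s' t')
  | .mul s t, .mul s' t' =>
    val a s = val b s' → val a t = val b t' → val a (.mul s t) = val b (.mul s' t')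
  | .app f s, .app g t => f = g → val a s = val b t → val a (.app f s) = val b (.app g t)
  | _, _ => True

/-- The recursion equations of addition and multiplication in the second argument. The third
valuation evaluates the sum `x * y + x` occurring in the recursion for `x * (y + 1)`. -/
def RecursionSpec (a b c : ι) : Prop :=
  (val a (.var 1) = 0 → val a sumTerm = val a (.var 0) ∧ val a prodTerm = 0) ∧
    (val a (.var 0) = val b (.var 0) → val b (.var 1) = val a (.var 1) + 1 →
      val b sumTerm = val a sumTerm + 1 ∧
        (val c (.var 0) = val a prodTerm → val c (.var 1) = val a (.var 0) →
          val b prodTerm = val c sumTerm))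

/-- The clauses of Tarski's truth definition, with only the introduction direction for `∃` and the
elimination direction for `∀`; the other directions are in `WitnessSpec`. -/
def FormSpec (a b : ι) : AForm → Prop
  | .eq s t => tru a (.eq s t) ↔ val a s = val a t
  | .lt s t => tru a (.lt s t) ↔ val a s < val a t
  | .neg φ => tru a (.neg φ) ↔ ¬ tru a φ
  | .disj φ χ => tru a (.disj φ χ) ↔ tru a φ ∨ tru a χ
  | .exN j φ => AgreeOff S val j a b → tru b φ → tru a (.exN j φ)
  | .allN j φ => AgreeOff S val j a b → tru a (.allN j φ) → tru b φ

/-- The valuation `d` is a witness, resp. counterexample, for a quantified formula at `a`. -/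
def WitnessSpec (a d : ι) : AForm → Prop
  | .exN j φ => tru a (.exN j φ) → AgreeOff S val j a d ∧ tru d φ
  | .allN j φ => ¬ tru a (.allN j φ) → AgreeOff S val j a d ∧ ¬ tru d φ
  | _ => True

/-- A family of valuations of the terms in `S` and the formulas in `P` that is rich and coherent
enough to be part of a structure for arithmetic. All conditions relate at most three valuations
and assert the existence of at most one, so that they are expressible in HyperLTL. -/
structure IsValuationSystem (P : List AForm) : Prop where
  term : ∀ s ∈ S, ∀ t ∈ S, ∀ a b, TermSpec val a b s t
  recursion : ∀ a b c, RecursionSpec val a b c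
  form : ∀ φ ∈ P, ∀ a b, FormSpec S val tru a b φ
  witness : ∀ φ ∈ P, ∀ a, ∃ d, WitnessSpec S val tru a d φ
  zero : ∀ j, .var j ∈ S → ∀ a, ∃ d, AgreeOff S val j a d ∧ val d (.var j) = 0
  succ : ∀ j, .var j ∈ S → ∀ a, ∃ d, AgreeOff S val j a d ∧ val d (.var j) = val a (.var j) + 1

end ValuationSystem

namespace IsValuationSystem

variable {ι : Type*} {S : List ATerm} {P : List AForm} {val : ι → ATerm → ℕ}
  {tru : ι → AForm → Prop} (h : IsValuationSystem S val tru P) (hSP : IsFragment S P)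

include h

theorem exists_agreeOff_eq {j : ℕ} (hj : .var j ∈ S) (a : ι) (n : ℕ) :
    ∃ d, AgreeOff S val j a d ∧ val d (.var j) = n := by
  induction n with
  | zero => exact h.zero j hj a
  | succ n ih =>
    obtain ⟨b, hab, hb⟩ := ih
    obtain ⟨d, hbd, hd⟩ := h.succ j hj b
    exact ⟨d, fun k hk hkj => (hab k hk hkj).trans (hbd k hk hkj), hd.trans (by rw [hb])⟩

include hSP

theorem exists_val_var_eq [Nonempty ι] (m n : ℕ) :
    ∃ a, val a (.var 0) = m ∧ val a (.var 1) = n := by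
  obtain ⟨a, -, ha⟩ := h.exists_agreeOff_eq hSP.var_zero_mem (Classical.arbitrary ι) m
  obtain ⟨b, hab, hb⟩ := h.exists_agreeOff_eq hSP.var_one_mem a n
  exact ⟨b, (hab 0 hSP.var_zero_mem zero_ne_one).symm.trans ha, hb⟩

theorem val_sumTerm (a : ι) : val a sumTerm = val a (.var 0) + val a (.var 1) := by
  generalize hn : val a (.var 1) = n
  induction n generalizing a with
  | zero => exact ((h.recursion a a a).1 hn).1
  | succ n ih =>
    have : Nonempty ι := ⟨a⟩
    obtain ⟨b, hb0, hb1⟩ := h.exists_val_var_eq hSP (val a (.var 0)) n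
    have hab := ((h.recursion b a a).2 hb0 (by rw [hn, hb1])).1
    rw [hab, ih b hb1, hb0, add_assoc]

theorem val_prodTerm (a : ι) : val a prodTerm = val a (.var 0) * val a (.var 1) := by
  generalize hn : val a (.var 1) = n
  induction n generalizing a with
  | zero => exact ((h.recursion a a a).1 hn).2
  | succ n ih =>
    have : Nonempty ι := ⟨a⟩
    obtain ⟨b, hb0, hb1⟩ := h.exists_val_var_eq hSP (val a (.var 0)) n
    obtain ⟨c, hc0, hc1⟩ := h.exists_val_var_eq hSP (val b prodTerm) (val b (.var 0))
    have hac := ((h.recursion b a c).2 hb0 (by rw [hn, hb1])).2 hc0 hc1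
    rw [hac, h.val_sumTerm hSP, hc0, hc1, ih b hb1, hb0, mul_add_one]

theorem val_add {s t : ATerm} (hst : s.add t ∈ S) (a : ι) :
    val a (s.add t) = val a s + val a t := by
  have : Nonempty ι := ⟨a⟩
  obtain ⟨b, hb0, hb1⟩ := h.exists_val_var_eq hSP (val a s) (val a t)
  rw [h.term _ hst _ hSP.sum_mem a b hb0.symm hb1.symm, ← hb0, ← hb1]
  exact h.val_sumTerm hSP b

theorem val_mul {s t : ATerm} (hst : s.mul t ∈ S) (a : ι) :
    val a (s.mul t) = val a s * val a t := by
  have : Nonempty ι := ⟨a⟩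
  obtain ⟨b, hb0, hb1⟩ := h.exists_val_var_eq hSP (val a s) (val a t)
  rw [h.term _ hst _ hSP.prod_mem a b hb0.symm hb1.symm, ← hb0, ← hb1]
  exact h.val_prodTerm hSP b

omit hSP in
theorem exists_val_app :
    ∃ F : ℕ → ℕ → ℕ, ∀ a f s, ATerm.app f s ∈ S → val a (.app f s) = F f (val a s) := by
  let input (f : ℕ) (p : ι × {s // ATerm.app f s ∈ S}) : ℕ := val p.1 p.2
  let output (f : ℕ) (p : ι × {s // ATerm.app f s ∈ S}) : ℕ := val p.1 (.app f p.2)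
  have hfactor (f : ℕ) : (output f).FactorsThrough (input f) :=
    fun p q hpq => h.term _ p.2.2 _ q.2.2 p.1 q.1 rfl hpq
  exact ⟨fun f => Function.extend (input f) (output f) 0,
    fun a f s hs => ((hfactor f).extend_apply 0 (a, ⟨s, hs⟩)).symm⟩

end IsValuationSystem

/-- The valuation `a` interprets the variables in `S` as the environment `v` does. -/
def Interprets {ι : Type*} (S : List ATerm) (val : ι → ATerm → ℕ) (a : ι) (v : ℕ → ℕ) : Prop :=
  ∀ j, .var j ∈ S → val a (.var j) = v j

theorem Interprets.update {ι : Type*} {S : List ATerm} {val : ι → ATerm → ℕ} {a d : ι} {v : ℕ → ℕ}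
    (ha : Interprets S val a v) {j n : ℕ} (had : AgreeOff S val j a d)
    (hd : val d (.var j) = n) : Interprets S val d (Function.update v j n) := by
  intro k hk
  rcases eq_or_ne k j with rfl | hkj
  · simpa using hd
  · simpa [hkj] using (had k hk hkj).symm.trans (ha k hk)

namespace IsValuationSystem

variable {ι : Type*} {S : List ATerm} {P : List AForm} {val : ι → ATerm → ℕ}
  {tru : ι → AForm → Prop} (h : IsValuationSystem S val tru P) (hSP : IsFragment S P)

include h hSP

theorem val_eq_eval {F : ℕ → ℕ → ℕ}
    (hF : ∀ a f s, ATerm.app f s ∈ S → val a (.app f s) = F f (val a s))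
    {a : ι} {v : ℕ → ℕ} (ha : Interprets S val a v) {s : ATerm} (hs : s ∈ S) :
    val a s = s.eval v F := by
  induction s with
  | var j => exact ha j hs
  | zero => exact h.term _ hs _ hs a a
  | one => exact h.term _ hs _ hs a a
  | add s t ihs iht =>
    have hs' : s ∈ S := hSP.args_term _ hs (by simp [ATerm.args])
    have ht' : t ∈ S := hSP.args_term _ hs (by simp [ATerm.args])
    rw [h.val_add hSP hs, ihs hs', iht ht', ATerm.eval]
  | mul s t ihs iht =>
    have hs' : s ∈ S := hSP.args_term _ hs (by simp [ATerm.args])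
    have ht' : t ∈ S := hSP.args_term _ hs (by simp [ATerm.args])
    rw [h.val_mul hSP hs, ihs hs', iht ht', ATerm.eval]
  | app f s ih =>
    have hs' : s ∈ S := hSP.args_term _ hs (by simp [ATerm.args])
    rw [hF a f s hs, ih hs', ATerm.eval]

theorem tru_iff_sat {F : ℕ → ℕ → ℕ}
    (hF : ∀ a f s, ATerm.app f s ∈ S → val a (.app f s) = F f (val a s))
    {a : ι} {v : ℕ → ℕ} (ha : Interprets S val a v) {φ : AForm} (hφ : φ ∈ P) :
    tru a φ ↔ φ.sat v F := by
  induction φ generalizing a v with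
  | eq s t | lt s t =>
    have hs : s ∈ S := hSP.args_form _ hφ (by simp [AForm.args])
    have ht : t ∈ S := hSP.args_form _ hφ (by simp [AForm.args])
    refine (h.form _ hφ a a).trans ?_
    rw [h.val_eq_eval hSP hF ha hs, h.val_eq_eval hSP hF ha ht, AForm.sat]
  | neg φ ih =>
    exact (h.form _ hφ a a).trans
      (not_congr (ih ha (hSP.children _ hφ (by simp [AForm.children]))))
  | disj φ χ ihφ ihχ =>
    exact (h.form _ hφ a a).trans
      (or_congr (ihφ ha (hSP.children _ hφ (by simp [AForm.children])))
        (ihχ ha (hSP.children _ hφ (by simp [AForm.children]))))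
  | exN j φ ih =>
    have hj : .var j ∈ S := hSP.args_form _ hφ (by simp [AForm.args])
    have hφ' : φ ∈ P := hSP.children _ hφ (by simp [AForm.children])
    constructor
    · intro hta
      obtain ⟨d, hd⟩ := h.witness _ hφ a
      exact ⟨_, (ih (ha.update (hd hta).1 rfl) hφ').mp (hd hta).2⟩
    · rintro ⟨n, hn⟩
      obtain ⟨d, had, hd⟩ := h.exists_agreeOff_eq hj a n
      exact h.form _ hφ a d had ((ih (ha.update had hd) hφ').mpr hn)
  | allN j φ ih =>
    have hj : .var j ∈ S := hSP.args_form _ hφ (by simp [AForm.args])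
    have hφ' : φ ∈ P := hSP.children _ hφ (by simp [AForm.children])
    constructor
    · intro hta n
      obtain ⟨d, had, hd⟩ := h.exists_agreeOff_eq hj a n
      exact (ih (ha.update had hd) hφ').mp (h.form _ hφ a d had hta)
    · intro hall
      by_contra hta
      obtain ⟨d, hd⟩ := h.witness _ hφ a
      exact (hd hta).2 ((ih (ha.update (hd hta).1 rfl) hφ').mpr (hall _))

theorem exists_sat {z : ι} {v : ℕ → ℕ} (hz : Interprets S val z v) {ψ : AForm} (hψ : ψ ∈ P)
    (hzψ : tru z ψ) : ∃ F, ψ.sat v F := by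
  obtain ⟨F, hF⟩ := h.exists_val_app
  exact ⟨F, (h.tru_iff_sat hSP hF hz hψ).mp hzψ⟩

end IsValuationSystem

/-- The environments that are constantly `x` off the variables in `S`. They are determined by their
values on the variables in `S`, and hence by their marks on a trace. -/
abbrev Env (S : List ATerm) (x : ℕ) : Type := {v : ℕ → ℕ // ∀ j, .var j ∉ S → v j = x}

/-- The value of a term in an environment, as a valuation. -/
def evalEnv {S : List ATerm} {x : ℕ} (F : ℕ → ℕ → ℕ) (v : Env S x) (s : ATerm) : ℕ := s.eval v F

/-- The truth of a formula in an environment, as a valuation. -/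
def satEnv {S : List ATerm} {x : ℕ} (F : ℕ → ℕ → ℕ) (v : Env S x) (φ : AForm) : Prop := φ.sat v F

namespace Env

variable {S : List ATerm} {x : ℕ}

/-- The environment `v` with the value of `j` changed to `n`. -/
def update (v : Env S x) {j : ℕ} (hj : .var j ∈ S) (n : ℕ) : Env S x :=
  ⟨Function.update v.1 j n, fun k hk =>
    (Function.update_of_ne (by grind) _ _).trans (v.2 k hk)⟩

theorem agreeOff_update (F : ℕ → ℕ → ℕ) (v : Env S x) {j : ℕ} (hj : .var j ∈ S) (n : ℕ) :
    AgreeOff S (evalEnv F) j v (v.update hj n) :=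
  fun _ _ hkj => (Function.update_of_ne hkj _ _).symm

theorem eq_update_of_agreeOff {F : ℕ → ℕ → ℕ} {v w : Env S x} {j : ℕ}
    (h : AgreeOff S (evalEnv F) j v w) : w.1 = Function.update v.1 j (w.1 j) := by
  refine Function.eq_update_iff.mpr ⟨rfl, fun k hkj => ?_⟩
  by_cases hk : .var k ∈ S
  · exact (h k hk hkj).symm
  · rw [v.2 k hk, w.2 k hk]

theorem isValuationSystem {P : List AForm} (hSP : IsFragment S P) (F : ℕ → ℕ → ℕ) :
    IsValuationSystem S (evalEnv F : Env S x → ATerm → ℕ) (satEnv F) P where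
  term s _ t _ a b := by
    cases s <;> cases t <;> simp +contextual [TermSpec, evalEnv, ATerm.eval]
  recursion a b c := by
    simp +contextual [RecursionSpec, evalEnv, sumTerm, prodTerm, ATerm.eval, mul_add, add_assoc]
  form φ _ a b := by
    cases φ with
    | exN j φ => exact fun hab hb => ⟨b.1 j, by rwa [← eq_update_of_agreeOff hab]⟩
    | allN j φ =>
      intro hab ha
      have hb := ha (b.1 j)
      rwa [← eq_update_of_agreeOff hab] at hb
    | _ => exact Iff.rfl
  witness φ hφ a := by
    cases φ with
    | exN j φ =>
      have hj : .var j ∈ S := hSP.args_form _ hφ (by simp [AForm.args])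
      by_cases ha : satEnv F a (.exN j φ)
      · obtain ⟨n, hn⟩ := ha
        exact ⟨a.update hj n, fun _ => ⟨agreeOff_update F a hj n, hn⟩⟩
      · exact ⟨a, fun h => absurd h ha⟩
    | allN j φ =>
      have hj : .var j ∈ S := hSP.args_form _ hφ (by simp [AForm.args])
      by_cases ha : satEnv F a (.allN j φ)
      · exact ⟨a, fun h => absurd ha h⟩
      · obtain ⟨n, hn⟩ := not_forall.mp ha
        exact ⟨a.update hj n, fun _ => ⟨agreeOff_update F a hj n, hn⟩⟩
    | _ => exact ⟨a, trivial⟩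
  zero j hj a := ⟨a.update hj 0, agreeOff_update F a hj 0, Function.update_self ..⟩
  succ j hj a := ⟨a.update hj _, agreeOff_update F a hj _, Function.update_self ..⟩

end Env

/-! ### Expressing systems of valuations in HyperLTL -/

/-- The proposition marking, on a trace, the position that is the value of a term. -/
def ATerm.mark (s : ATerm) : ℕ := 2 * s.code

/-- The proposition whose presence at position `0` of a trace marks the truth of a formula. -/
def AForm.mark (φ : AForm) : ℕ := 2 * φ.code + 1

/-- The traces `tr` represent the valuations `val` and `tru`. -/
structure Represents {ι : Type*} (S : List ATerm) (tr : ι → Trace ℕ) (val : ι → ATerm → ℕ)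
    (tru : ι → AForm → Prop) : Prop where
  value : ∀ i, ∀ s ∈ S, ∀ n, s.mark ∈ tr i n ↔ val i s = n
  truth : ∀ i φ, φ.mark ∈ tr i 0 ↔ tru i φ

namespace QF

/-- The value of `s` on the trace `x` equals the value of `t` on the trace `y`. -/
def valEq (s : ATerm) (x : ℕ) (t : ATerm) (y : ℕ) : QF ℕ :=
  eventually ((atom s.mark x).and (atom t.mark y))

/-- The value of `s` on the trace `x` is less than the value of `t` on the trace `y`. -/
def valLt (s : ATerm) (x : ℕ) (t : ATerm) (y : ℕ) : QF ℕ :=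
  eventually ((atom s.mark x).and (next (eventually (atom t.mark y))))

/-- The value of `t` on the trace `y` is the successor of the value of `s` on the trace `x`. -/
def valSucc (s : ATerm) (x : ℕ) (t : ATerm) (y : ℕ) : QF ℕ :=
  eventually ((atom s.mark x).and (next (atom t.mark y)))

/-- The term `s` has exactly one value on the trace `x`. -/
def valUnique (s : ATerm) (x : ℕ) : QF ℕ :=
  (eventually (atom s.mark x)).and (valLt s x s x).neg

theorem sat_valUnique (s : ATerm) (x : ℕ) (As : ℕ → Trace ℕ) :
    (valUnique s x).sat As ↔ ∃! n, s.mark ∈ As x n := by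
  simp only [valUnique, valLt, sat_and, sat_neg, sat_eventually, sat_atom, sat_next,
    shiftAsg_apply, not_exists, not_and, zero_add]
  refine ⟨fun ⟨⟨m, hm⟩, huniq⟩ => ⟨m, hm, fun n hn => ?_⟩,
    fun ⟨m, hm, huniq⟩ => ⟨⟨m, hm⟩, fun n hn k hk => ?_⟩⟩
  · have hnotLt {m n : ℕ} (hm : s.mark ∈ As x m) (hn : s.mark ∈ As x n) : ¬ m < n := by
      intro hmn
      obtain ⟨k, rfl⟩ := Nat.exists_eq_add_of_lt hmn
      exact huniq m hm k (by convert hn using 2; omega)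
    exact le_antisymm (not_lt.mp (hnotLt hm hn)) (not_lt.mp (hnotLt hn hm))
  · have hkn := (huniq _ hk).trans (huniq _ hn).symm
    omega

/-- `AgreeOff` for the traces `x` and `y`. -/
def agreeOffClause (S : List ATerm) (j x y : ℕ) : QF ℕ :=
  all (S.map fun
    | .var k => if k = j then top else valEq (.var k) x (.var k) y
    | _ => top)

/-- `TermSpec` for the traces `1` and `2`. -/
def termClause : ATerm → ATerm → QF ℕ
  | .zero, _ => atom ATerm.zero.mark 1
  | .one, _ => next (atom ATerm.one.mark 1)
  | .add s t, .add s' t' =>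
    (valEq s 1 s' 2).imp ((valEq t 1 t' 2).imp (valEq (.add s t) 1 (.add s' t') 2))
  | .mul s t, .mul s' t' =>
    (valEq s 1 s' 2).imp ((valEq t 1 t' 2).imp (valEq (.mul s t) 1 (.mul s' t') 2))
  | .app f s, .app g t =>
    if f = g then (valEq s 1 t 2).imp (valEq (.app f s) 1 (.app g t) 2) else top
  | _, _ => top

/-- `RecursionSpec` for the traces `1`, `2` and `3`. -/
def recursionClause : QF ℕ :=
  ((atom (ATerm.var 1).mark 1).imp
      ((valEq sumTerm 1 (.var 0) 1).and (atom prodTerm.mark 1))).and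
    ((valEq (.var 0) 1 (.var 0) 2).imp ((valSucc (.var 1) 1 (.var 1) 2).imp
      ((valSucc sumTerm 1 sumTerm 2).and
        ((valEq (.var 0) 3 prodTerm 1).imp ((valEq (.var 1) 3 (.var 0) 1).imp
          (valEq prodTerm 2 sumTerm 3))))))

/-- `FormSpec` for the traces `1` and `2`. -/
def formClause (S : List ATerm) : AForm → QF ℕ
  | .eq s t => (atom (AForm.eq s t).mark 1).iff (valEq s 1 t 1)
  | .lt s t => (atom (AForm.lt s t).mark 1).iff (valLt s 1 t 1)
  | .neg φ => (atom φ.neg.mark 1).iff (atom φ.mark 1).neg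
  | .disj φ χ => (atom (φ.disj χ).mark 1).iff ((atom φ.mark 1).disj (atom χ.mark 1))
  | .exN j φ => (agreeOffClause S j 1 2).imp ((atom φ.mark 2).imp (atom (AForm.exN j φ).mark 1))
  | .allN j φ => (agreeOffClause S j 1 2).imp ((atom (AForm.allN j φ).mark 1).imp (atom φ.mark 2))

/-- `WitnessSpec` for the traces `0` and `1`. -/
def witnessClause (S : List ATerm) : AForm → QF ℕ
  | .exN j φ =>
    (atom (AForm.exN j φ).mark 0).imp ((agreeOffClause S j 0 1).and (atom φ.mark 1))
  | .allN j φ =>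
    (atom (AForm.allN j φ).mark 0).neg.imp ((agreeOffClause S j 0 1).and (atom φ.mark 1).neg)
  | _ => top

/-- The zero witness of `IsValuationSystem` for the traces `0` and `1`, trivial unless the given
term is a variable. -/
def zeroClause (S : List ATerm) : ATerm → QF ℕ
  | .var j => (agreeOffClause S j 0 1).and (atom (ATerm.var j).mark 1)
  | _ => top

/-- The successor witness of `IsValuationSystem` for the traces `0` and `1`, trivial unless the
given term is a variable. -/
def succClause (S : List ATerm) : ATerm → QF ℕ
  | .var j => (agreeOffClause S j 0 1).and (valSucc (.var j) 0 (.var j) 1)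
  | _ => top

/-- All variables in `S` have the value `0` on the trace `0`. -/
def zeroEnvClause (S : List ATerm) : QF ℕ :=
  all (S.map fun
    | .var j => atom (ATerm.var j).mark 0
    | _ => top)

end QF

namespace Represents

variable {ι : Type*} {S : List ATerm} {P : List AForm} {tr : ι → Trace ℕ} {val : ι → ATerm → ℕ}
  {tru : ι → AForm → Prop} (h : Represents S tr val tru) (hSP : IsFragment S P)

include h

theorem sat_valEq {s t : ATerm} (hs : s ∈ S) (ht : t ∈ S) (σ : ℕ → ι) (x y : ℕ) :
    (QF.valEq s x t y).sat (tr ∘ σ) ↔ val (σ x) s = val (σ y) t := by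
  simp [QF.valEq, h.value _ _ hs, h.value _ _ ht, eq_comm]

theorem sat_valLt {s t : ATerm} (hs : s ∈ S) (ht : t ∈ S) (σ : ℕ → ι) (x y : ℕ) :
    (QF.valLt s x t y).sat (tr ∘ σ) ↔ val (σ x) s < val (σ y) t := by
  simp [QF.valLt, h.value _ _ hs, h.value _ _ ht, Nat.lt_iff_add_one_le, le_iff_exists_add]

theorem sat_valSucc {s t : ATerm} (hs : s ∈ S) (ht : t ∈ S) (σ : ℕ → ι) (x y : ℕ) :
    (QF.valSucc s x t y).sat (tr ∘ σ) ↔ val (σ y) t = val (σ x) s + 1 := by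
  simp [QF.valSucc, h.value _ _ hs, h.value _ _ ht, add_comm]

theorem sat_agreeOffClause (σ : ℕ → ι) (j x y : ℕ) :
    (QF.agreeOffClause S j x y).sat (tr ∘ σ) ↔ AgreeOff S val j (σ x) (σ y) := by
  simp only [QF.agreeOffClause, QF.sat_all, List.forall_mem_map, AgreeOff]
  constructor
  · intro hall k hk hkj
    simpa [hkj, h.sat_valEq hk hk] using hall _ hk
  · rintro hall (k | _) hk <;> try exact QF.sat_top _
    by_cases hkj : k = j
    · simp [hkj]
    · simpa [hkj, h.sat_valEq hk hk] using hall k hk hkj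

include hSP in
theorem sat_termClause {s t : ATerm} (hs : s ∈ S) (ht : t ∈ S) (z a b c : ι) :
    (QF.termClause s t).sat (tr ∘ assign₄ z a b c) ↔ TermSpec val a b s t := by
  have hs' := hSP.args_term s hs
  have ht' := hSP.args_term t ht
  cases s <;> cases t
  case app.app f s g t =>
    by_cases hfg : f = g <;>
      simp_all [QF.termClause, TermSpec, ATerm.args, h.sat_valEq, assign₄]
  all_goals simp_all [QF.termClause, TermSpec, ATerm.args, h.value, h.sat_valEq, assign₄]

include hSP in
theorem sat_recursionClause (z a b c : ι) :
    QF.recursionClause.sat (tr ∘ assign₄ z a b c) ↔ RecursionSpec val a b c := by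
  simp [QF.recursionClause, RecursionSpec, h.value, h.sat_valEq, h.sat_valSucc, hSP.sum_mem,
    hSP.prod_mem, hSP.var_zero_mem, hSP.var_one_mem, assign₄]

include hSP in
theorem sat_formClause {φ : AForm} (hφ : φ ∈ P) (z a b c : ι) :
    (QF.formClause S φ).sat (tr ∘ assign₄ z a b c) ↔ FormSpec S val tru a b φ := by
  have hφ' := hSP.args_form φ hφ
  cases φ <;> simp_all [QF.formClause, FormSpec, AForm.args, h.truth, h.sat_valEq, h.sat_valLt,
    h.sat_agreeOffClause, assign₄]

theorem sat_witnessClause (φ : AForm) (a d : ι) :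
    (QF.witnessClause S φ).sat (tr ∘ assign₂ a d) ↔ WitnessSpec S val tru a d φ := by
  cases φ <;> simp [QF.witnessClause, WitnessSpec, h.truth, h.sat_agreeOffClause, assign₂]

theorem sat_zeroClause {j : ℕ} (hj : .var j ∈ S) (a d : ι) :
    (QF.zeroClause S (.var j)).sat (tr ∘ assign₂ a d) ↔
      AgreeOff S val j a d ∧ val d (.var j) = 0 := by
  simp [QF.zeroClause, h.value _ _ hj, h.sat_agreeOffClause, assign₂]

theorem sat_succClause {j : ℕ} (hj : .var j ∈ S) (a d : ι) :
    (QF.succClause S (.var j)).sat (tr ∘ assign₂ a d) ↔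
      AgreeOff S val j a d ∧ val d (.var j) = val a (.var j) + 1 := by
  simp [QF.succClause, h.sat_valSucc hj hj, h.sat_agreeOffClause, assign₂]

theorem sat_nextIter_zeroEnvClause (x : ℕ) (z a b c : ι) :
    ((QF.zeroEnvClause S).nextIter x).sat (tr ∘ assign₄ z a b c) ↔
      Interprets S val z fun _ => x := by
  simp only [QF.sat_nextIter, QF.zeroEnvClause, QF.sat_all, List.forall_mem_map, Interprets]
  constructor
  · intro hall j hj
    simpa [h.value _ _ hj, assign₄] using hall _ hj
  · rintro hall (j | _) hj <;> try exact QF.sat_top _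
    simpa [h.value _ _ hj, assign₄] using hall j hj

end Represents

/-! ### The reduction -/

namespace QF

/-- The conditions that any three traces satisfy with the trace `0`, which represents the
environment that is constantly `x`. -/
def universalClause (S : List ATerm) (P : List AForm) (ψ : AForm) (x : ℕ) : QF ℕ :=
  ((zeroEnvClause S).nextIter x).and ((atom ψ.mark 0).and
    ((all (S.map (valUnique · 1))).and ((all (S.flatMap fun s => S.map (termClause s))).and
      (recursionClause.and (all (P.map (formClause S)))))))

/-- The conditions that each trace satisfies with some companion. -/
def companionClauses (S : List ATerm) (P : List AForm) : List (QF ℕ) :=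
  P.map (witnessClause S) ++ (S.map (zeroClause S) ++ S.map (succClause S))

end QF

/-- A sentence that is satisfiable if and only if `x` has the `Σ¹₁` property given by `ψ`. -/
def reduction (ψ : AForm) (x : ℕ) : HFormula ℕ :=
  HFormula.axiomSentence (QF.universalClause ψ.terms ψ.subformulas ψ x)
    (QF.companionClauses ψ.terms ψ.subformulas)

namespace Represents

variable {ι : Type*} {S : List ATerm} {P : List AForm} {tr : ι → Trace ℕ} {val : ι → ATerm → ℕ}
  {tru : ι → AForm → Prop} (h : Represents S tr val tru) (hSP : IsFragment S P)

include h

theorem sat_valUnique {s : ATerm} (hs : s ∈ S) (σ : ℕ → ι) (x : ℕ) :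
    (QF.valUnique s x).sat (tr ∘ σ) :=
  (QF.sat_valUnique ..).mpr
    ⟨val (σ x) s, (h.value _ _ hs _).mpr rfl, fun _ hn => ((h.value _ _ hs _).mp hn).symm⟩

include hSP in
theorem sat_universalClause (ψ : AForm) (x : ℕ) (z a b c : ι) :
    (QF.universalClause S P ψ x).sat (tr ∘ assign₄ z a b c) ↔
      Interprets S val z (fun _ => x) ∧ tru z ψ ∧ (∀ s ∈ S, ∀ t ∈ S, TermSpec val a b s t) ∧
        RecursionSpec val a b c ∧ ∀ φ ∈ P, FormSpec S val tru a b φ := by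
  have hunique : (QF.all (S.map (QF.valUnique · 1))).sat (tr ∘ assign₄ z a b c) := by
    simpa using fun s hs => h.sat_valUnique hs _ 1
  have hterm : (QF.all (S.flatMap fun s => S.map (QF.termClause s))).sat (tr ∘ assign₄ z a b c) ↔
      ∀ s ∈ S, ∀ t ∈ S, TermSpec val a b s t := by
    simp only [QF.sat_all, List.forall_mem_flatMap, List.forall_mem_map]
    exact forall₄_congr fun s hs t ht => h.sat_termClause hSP hs ht z a b c
  have hform : (QF.all (P.map (QF.formClause S))).sat (tr ∘ assign₄ z a b c) ↔
      ∀ φ ∈ P, FormSpec S val tru a b φ := by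
    simp only [QF.sat_all, List.forall_mem_map]
    exact forall₂_congr fun φ hφ => h.sat_formClause hSP hφ z a b c
  have hstart : (QF.atom ψ.mark 0).sat (tr ∘ assign₄ z a b c) ↔ tru z ψ := h.truth z ψ
  simp only [QF.universalClause, QF.sat_and, h.sat_nextIter_zeroEnvClause, hstart, hunique, hterm,
    h.sat_recursionClause hSP, hform, true_and]

theorem exists_sat_companionClauses (a : ι) :
    (∀ C ∈ QF.companionClauses S P, ∃ d, C.sat (tr ∘ assign₂ a d)) ↔
      (∀ φ ∈ P, ∃ d, WitnessSpec S val tru a d φ) ∧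
      (∀ j, .var j ∈ S → ∃ d, AgreeOff S val j a d ∧ val d (.var j) = 0) ∧
      ∀ j, .var j ∈ S → ∃ d, AgreeOff S val j a d ∧ val d (.var j) = val a (.var j) + 1 := by
  simp only [QF.companionClauses, List.forall_mem_append, List.forall_mem_map,
    h.sat_witnessClause]
  refine and_congr_right fun _ => and_congr ?_ ?_
  · refine ⟨fun hall j hj => by simpa only [h.sat_zeroClause hj] using hall _ hj, ?_⟩
    rintro hall (j | _) hs <;> try exact ⟨a, QF.sat_top _⟩
    simpa only [h.sat_zeroClause hs] using hall j hs
  · refine ⟨fun hall j hj => by simpa only [h.sat_succClause hj] using hall _ hj, ?_⟩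
    rintro hall (j | _) hs <;> try exact ⟨a, QF.sat_top _⟩
    simpa only [h.sat_succClause hs] using hall j hs

end Represents

theorem Represents.hModels_reduction {ι : Type*} {ψ : AForm} {tr : ι → Trace ℕ}
    {val : ι → ATerm → ℕ} {tru : ι → AForm → Prop} (h : Represents ψ.terms tr val tru) (x : ℕ) :
    HModels (Set.range tr) (reduction ψ x) ↔
      IsValuationSystem ψ.terms val tru ψ.subformulas ∧
        ∃ z, Interprets ψ.terms val z (fun _ => x) ∧ tru z ψ := by
  simp only [reduction, HFormula.hModels_axiomSentence, h.sat_universalClause ψ.isFragment,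
    h.exists_sat_companionClauses]
  constructor
  · rintro ⟨z, hU, hW⟩
    exact ⟨⟨fun s hs t ht a b => (hU a b a).2.2.1 s hs t ht, fun a b c => (hU a b c).2.2.2.1,
      fun φ hφ a b => (hU a b a).2.2.2.2 φ hφ, fun φ hφ a => (hW a).1 φ hφ,
      fun j hj a => (hW a).2.1 j hj, fun j hj a => (hW a).2.2 j hj⟩,
      z, (hU z z z).1, (hU z z z).2.1⟩
  · rintro ⟨hV, z, hz, hzψ⟩
    exact ⟨z, fun a b c => ⟨hz, hzψ, fun s hs t ht => hV.term s hs t ht a b, hV.recursion a b c,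
      fun φ hφ => hV.form φ hφ a b⟩,
      fun a => ⟨fun φ hφ => hV.witness φ hφ a, fun j hj => hV.zero j hj a,
        fun j hj => hV.succ j hj a⟩⟩

theorem exists_represents_of_hModels_reduction {ι : Type*} {ψ : AForm} {x : ℕ} {tr : ι → Trace ℕ}
    (h : HModels (Set.range tr) (reduction ψ x)) :
    ∃ val tru, Represents ψ.terms tr val tru := by
  obtain ⟨z, hU, -⟩ := (HFormula.hModels_axiomSentence ..).mp h
  have hunique (i : ι) (s : ATerm) (hs : s ∈ ψ.terms) : ∃! n, s.mark ∈ tr i n := by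
    have hall := hU i i i
    simp only [QF.universalClause, QF.sat_and, QF.sat_all, List.forall_mem_map] at hall
    exact (QF.sat_valUnique ..).mp (hall.2.2.1 s hs)
  classical
  choose! val hval huniq using hunique
  exact ⟨val, fun i φ => φ.mark ∈ tr i 0,
    fun i s hs n => ⟨fun hn => (huniq i s hs n hn).symm, fun hn => hn ▸ hval i s hs⟩,
    fun _ _ => Iff.rfl⟩

/-- The trace on which the position of the mark of a term in `S` is its value in `v`, and that
carries at position `0` the marks of the formulas that hold in `v`. -/
def Env.trace {S : List ATerm} {x : ℕ} (F : ℕ → ℕ → ℕ) (v : Env S x) : Trace ℕ :=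
  fun n => {a | (∃ s ∈ S, s.mark = a ∧ evalEnv F v s = n) ∨
    n = 0 ∧ ∃ φ, AForm.mark φ = a ∧ satEnv F v φ}

theorem Env.represents_trace (S : List ATerm) (x : ℕ) (F : ℕ → ℕ → ℕ) :
    Represents S (Env.trace F : Env S x → Trace ℕ) (evalEnv F) (satEnv F) where
  value v s hs n := by
    constructor
    · rintro (⟨t, -, hts, ht⟩ | ⟨-, φ, hφ, -⟩)
      · rwa [ATerm.code_injective (mul_left_cancel₀ two_ne_zero hts)] at ht
      · simp only [AForm.mark, ATerm.mark] at hφ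
        omega
    · exact fun hn => .inl ⟨s, hs, rfl, hn⟩
  truth v φ := by
    constructor
    · rintro (⟨s, -, hs, -⟩ | ⟨-, χ, hχ, hv⟩)
      · simp only [AForm.mark, ATerm.mark] at hs
        omega
      · simp only [AForm.mark] at hχ
        rwa [AForm.code_injective (show χ.code = φ.code by omega)] at hv
    · exact fun hv => .inr ⟨rfl, φ, rfl, hv⟩

theorem Env.ultPeriodic_trace {S : List ATerm} {x : ℕ} (F : ℕ → ℕ → ℕ) (v : Env S x) :
    UltPeriodic (v.trace F) := by
  obtain ⟨b, hb⟩ := (S.map (evalEnv F v)).toFinset.exists_le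
  have hempty (n : ℕ) (hn : b + 1 ≤ n) : v.trace F n = ∅ := by
    ext a
    simp only [Env.trace, Set.mem_ofPred_eq, Set.mem_empty_iff_false, iff_false]
    rintro (⟨s, hs, -, rfl⟩ | ⟨rfl, -⟩)
    · have := hb (evalEnv F v s) (by simpa using ⟨s, hs, rfl⟩)
      omega
    · omega
  exact ⟨b + 1, 1, by omega, le_rfl, fun n hn => by rw [hempty n hn, hempty (n + 1) (by omega)]⟩

theorem exists_hModels_reduction_iff (ψ : AForm) (x : ℕ) :
    (∃ T, (∀ t ∈ T, UltPeriodic t) ∧ HModels T (reduction ψ x)) ↔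
      ∃ F, ψ.sat (fun _ => x) F := by
  constructor
  · rintro ⟨T, -, hT⟩
    rw [← Subtype.range_coe (s := T)] at hT
    obtain ⟨val, tru, hrep⟩ := exists_represents_of_hModels_reduction hT
    obtain ⟨hV, z, hz, hzψ⟩ := (hrep.hModels_reduction x).mp hT
    exact hV.exists_sat ψ.isFragment hz ψ.self_mem_subformulas hzψ
  · rintro ⟨F, hF⟩
    refine ⟨Set.range (Env.trace F : Env ψ.terms x → Trace ℕ),
      Set.forall_mem_range.mpr (Env.ultPeriodic_trace F), ?_⟩
    exact ((Env.represents_trace _ x F).hModels_reduction x).mpr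
      ⟨Env.isValuationSystem ψ.isFragment F, ⟨fun _ => x, fun _ _ => rfl⟩, fun _ _ => rfl, hF⟩

theorem computable_codeWith_reduction (ψ : AForm) :
    Computable fun x => (reduction ψ x).codeWith id := by
  refine (HFormula.primrec_codeWith_axiomSentence ?_ _).to_comp
  simp only [QF.universalClause, QF.rename, QF.and, QF.rename_nextIter]
  exact QF.primrec_codeWith_and (QF.primrec_codeWith_nextIter _ _) (.const _)

theorem manyOneRed_upSatCodes {N : Set ℕ} (hN : Sigma11 N) : ManyOneRed N UPSatCodes := by
  obtain ⟨ψ, hψ⟩ := hN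
  refine ⟨_, computable_codeWith_reduction ψ, fun x => ?_⟩
  rw [hψ, ← exists_hModels_reduction_iff]
  constructor
  · exact fun h => ⟨_, HFormula.isSentence_axiomSentence _ _, rfl, h⟩
  · rintro ⟨φ, -, hφ, h⟩
    rwa [HFormula.codeWith_injective Function.injective_id hφ] at h

/-! ### Certificates -/

theorem lt_pair_succ (k d : ℕ) : d < Nat.pair (k + 1) d := by
  rw [Nat.pair]
  split_ifs <;> nlinarith

theorem lt_pair_succ_pair_left (k d e : ℕ) : d < Nat.pair (k + 1) (Nat.pair d e) :=
  (Nat.left_le_pair d e).trans_lt (lt_pair_succ k _)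

theorem lt_pair_succ_pair_right (k d e : ℕ) : e < Nat.pair (k + 1) (Nat.pair d e) :=
  (Nat.right_le_pair d e).trans_lt (lt_pair_succ k _)

/-- Number-theoretic data describing a countable family of traces together with truth predicates
for codes of formulas. Indices `A`, `B` stand for functions `look A`, `look B` on variables, which
serve in two roles: as the assignment `x ↦ trace (look B x)`, and as the set
`{x | look A x ≠ 0}` of variables that may occur free. -/
@[ext] structure Certificate where
  trace : ℕ → Trace ℕ
  dom : Set ℕ
  look : ℕ → ℕ → ℕ
  upd : ℕ → ℕ → ℕ → ℕ
  qfOk : ℕ → ℕ → Prop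
  qfSat : ℕ → ℕ → ℕ → Prop
  hfOk : ℕ → ℕ → Prop
  hfSat : ℕ → ℕ → Prop

namespace Certificate

/-- The assignment with index `B`. -/
def asg (C : Certificate) (B x : ℕ) : Trace ℕ := C.trace (C.look B x)

/-- `c` codes a quantifier-free formula with free variables in the set with index `A`, in terms of
its immediate subformulas, and `qfSat c B i` is its truth at position `i`. -/
def QFSpec (C : Certificate) (c A : ℕ) : Prop :=
  (∃ a x, c = .pair 0 (.pair a x) ∧ C.look A x ≠ 0 ∧
    ∀ B i, C.qfSat c B i ↔ a ∈ C.trace (C.look B x) i) ∨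
  (∃ d, c = .pair 1 d ∧ C.qfOk d A ∧ ∀ B i, C.qfSat c B i ↔ ¬ C.qfSat d B i) ∨
  (∃ d e, c = .pair 2 (.pair d e) ∧ C.qfOk d A ∧ C.qfOk e A ∧
    ∀ B i, C.qfSat c B i ↔ C.qfSat d B i ∨ C.qfSat e B i) ∨
  (∃ d, c = .pair 3 d ∧ C.qfOk d A ∧ ∀ B i, C.qfSat c B i ↔ C.qfSat d B (i + 1)) ∨
  ∃ d e, c = .pair 4 (.pair d e) ∧ C.qfOk d A ∧ C.qfOk e A ∧
    ∀ B i, C.qfSat c B i ↔ ∃ j, C.qfSat e B (i + j) ∧ ∀ k < j, C.qfSat d B (i + k)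

/-- The analogue of `QFSpec` for formulas with quantifiers. Since `Nat.pair 0 (Nat.pair 0 0) = 0`,
the condition `d < c` is needed to exclude circular codes. -/
def HFSpec (C : Certificate) (c A : ℕ) : Prop :=
  (∃ x d, c = .pair 0 (.pair x d) ∧ d < c ∧ C.hfOk d (C.upd A x 1) ∧
    ∀ B, C.hfSat c B ↔ ∃ t, t ∈ C.dom ∧ C.hfSat d (C.upd B x t)) ∨
  (∃ x d, c = .pair 1 (.pair x d) ∧ d < c ∧ C.hfOk d (C.upd A x 1) ∧
    ∀ B, C.hfSat c B ↔ ∀ t, t ∈ C.dom → C.hfSat d (C.upd B x t)) ∨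
  ∃ d, c = .pair 2 d ∧ C.qfOk d A ∧ ∀ B, C.hfSat c B ↔ C.qfSat d B 0

/-- The certificate `C` witnesses that `n` codes a sentence satisfied by the set of the traces with
indices in `dom`, all of which are ultimately periodic. -/
structure Valid (C : Certificate) (n : ℕ) : Prop where
  trace_zero : C.trace 0 = fun _ => ∅
  ultPeriodic : ∀ t, t ∈ C.dom → UltPeriodic (C.trace t)
  look_upd : ∀ A x t, C.look (C.upd A x t) = Function.update (C.look A) x t
  qf : ∀ c A, C.qfOk c A → C.QFSpec c A
  hf : ∀ c A, C.hfOk c A → C.HFSpec c A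
  start : ∃ A, (∀ x, C.look A x = 0) ∧ C.hfOk n A ∧ C.hfSat n A

namespace Valid

variable {C : Certificate} {n : ℕ} (h : C.Valid n)

include h

theorem exists_qf (c A : ℕ) (hc : C.qfOk c A) :
    ∃ q : QF ℕ, q.codeWith id = c ∧ q.freeVars ⊆ {x | C.look A x ≠ 0} ∧
      ∀ B i, C.qfSat c B i ↔ q.sat (shiftAsg (C.asg B) i) := by
  induction c using Nat.strong_induction_on with
  | _ c ih =>
    rcases h.qf c A hc with ⟨a, x, rfl, hx, hsat⟩ | ⟨d, rfl, hd, hsat⟩ |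
      ⟨d, e, rfl, hd, he, hsat⟩ | ⟨d, rfl, hd, hsat⟩ | ⟨d, e, rfl, hd, he, hsat⟩
    · exact ⟨.atom a x, rfl, by simpa [QF.freeVars] using hx, by simpa [asg] using hsat⟩
    · obtain ⟨q, rfl, hfree, hq⟩ := ih d (lt_pair_succ 0 d) hd
      exact ⟨q.neg, rfl, hfree, by simp [hsat, hq]⟩
    · obtain ⟨q, rfl, hqfree, hq⟩ := ih d (lt_pair_succ_pair_left 1 d e) hd
      obtain ⟨r, rfl, hrfree, hr⟩ := ih e (lt_pair_succ_pair_right 1 _ e) he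
      exact ⟨q.disj r, rfl, Set.union_subset hqfree hrfree, by simp [hsat, hq, hr]⟩
    · obtain ⟨q, rfl, hfree, hq⟩ := ih d (lt_pair_succ 2 d) hd
      exact ⟨q.next, rfl, hfree, by simp [hsat, hq]⟩
    · obtain ⟨q, rfl, hqfree, hq⟩ := ih d (lt_pair_succ_pair_left 3 d e) hd
      obtain ⟨r, rfl, hrfree, hr⟩ := ih e (lt_pair_succ_pair_right 3 _ e) he
      exact ⟨q.untl r, rfl, Set.union_subset hqfree hrfree, by simp [hsat, hq, hr]⟩

theorem asg_upd (B x t : ℕ) : C.asg (C.upd B x t) = Function.update (C.asg B) x (C.trace t) := by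
  funext y
  rcases eq_or_ne y x with rfl | hyx <;> simp [asg, h.look_upd, *]

theorem freeVars_diff_subset {φ : HFormula ℕ} {A x : ℕ}
    (hφ : φ.freeVars ⊆ {y | C.look (C.upd A x 1) y ≠ 0}) :
    φ.freeVars \ {x} ⊆ {y | C.look A y ≠ 0} := by
  rintro y ⟨hy, hyx⟩
  have hyx : y ≠ x := hyx
  simpa [h.look_upd, hyx] using hφ hy

theorem exists_hFormula (c A : ℕ) (hc : C.hfOk c A) :
    ∃ φ : HFormula ℕ, φ.codeWith id = c ∧ φ.freeVars ⊆ {x | C.look A x ≠ 0} ∧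
      ∀ B, C.hfSat c B ↔ φ.sat (C.trace '' C.dom) (C.asg B) := by
  induction c using Nat.strong_induction_on generalizing A with
  | _ c ih =>
    rcases h.hf c A hc with ⟨x, d, hcd, hlt, hd, hsat⟩ | ⟨x, d, hcd, hlt, hd, hsat⟩ |
      ⟨d, rfl, hd, hsat⟩
    · obtain ⟨φ, rfl, hfree, hφ⟩ := ih d hlt _ hd
      refine ⟨.ex x φ, hcd.symm, h.freeVars_diff_subset hfree, fun B => ?_⟩
      simp [hsat, hφ, h.asg_upd, HFormula.sat]
    · obtain ⟨φ, rfl, hfree, hφ⟩ := ih d hlt _ hd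
      refine ⟨.all x φ, hcd.symm, h.freeVars_diff_subset hfree, fun B => ?_⟩
      simp [hsat, hφ, h.asg_upd, HFormula.sat]
    · obtain ⟨q, rfl, hfree, hq⟩ := h.exists_qf d A hd
      exact ⟨.qf q, rfl, hfree, by simp [hsat, hq, HFormula.sat]⟩

theorem mem_upSatCodes : n ∈ UPSatCodes := by
  obtain ⟨A, hA, hok, hsat⟩ := h.start
  obtain ⟨φ, hcode, hfree, hφ⟩ := h.exists_hFormula n A hok
  have hasg : C.asg A = fun _ _ => ∅ := by
    funext x
    rw [asg, hA, h.trace_zero]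
  refine ⟨φ, ?_, hcode, C.trace '' C.dom, Set.forall_mem_image.mpr h.ultPeriodic, ?_⟩
  · exact Set.subset_empty_iff.mp (hfree.trans fun x hx => hx (hA x))
  · rw [HModels, ← hasg]
    exact (hφ A).mp hsat

end Valid

end Certificate

/-! ### Countable models -/

namespace Trace

/-- The restriction of a trace to the atoms less than `K`. -/
def restrict (K : ℕ) (t : Trace ℕ) : Trace ℕ := fun n => t n ∩ Set.Iio K

theorem finite_periodic_restrict (K s : ℕ) {p : ℕ} (hp : 1 ≤ p) :
    {t : Trace ℕ | (∀ n, t n ⊆ Set.Iio K) ∧ ∀ n, s ≤ n → t (n + p) = t n}.Finite := by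
  refine Set.Finite.of_injOn (f := fun (t : Trace ℕ) (i : Fin (s + p)) => t i)
    (t := {g | ∀ i, g i ∈ {a | a ⊆ Set.Iio K}}) (fun t ht i => ht.1 i) ?_
    (Set.Finite.pi' fun _ => (Set.finite_Iio K).finite_subsets)
  rintro t ⟨-, ht⟩ u ⟨-, hu⟩ htu
  funext n
  induction n using Nat.strong_induction_on with
  | _ n ih =>
    by_cases hn : n < s + p
    · exact congrFun htu ⟨n, hn⟩
    · obtain ⟨m, rfl⟩ := Nat.exists_eq_add_of_le' (show p ≤ n by omega)
      rw [ht m (by omega), hu m (by omega), ih m (by omega)]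

theorem countable_ultPeriodic_subset (K : ℕ) :
    {t : Trace ℕ | UltPeriodic t ∧ ∀ n, t n ⊆ Set.Iio K}.Countable := by
  have hcount : (⋃ (s : ℕ) (p : ℕ) (_ : 1 ≤ p),
      {t : Trace ℕ | (∀ n, t n ⊆ Set.Iio K) ∧ ∀ n, s ≤ n → t (n + p) = t n}).Countable :=
    Set.countable_iUnion fun s => Set.countable_iUnion fun p => Set.countable_iUnion fun hp =>
      (finite_periodic_restrict K s hp).countable
  refine hcount.mono ?_
  rintro t ⟨⟨s, p, -, hp, ht⟩, hK⟩
  simp only [Set.mem_iUnion]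
  exact ⟨s, p, hp, hK, ht⟩

end Trace

theorem UltPeriodic.restrict {t : Trace ℕ} (ht : UltPeriodic t) (K : ℕ) :
    UltPeriodic (t.restrict K) := by
  obtain ⟨s, p, hs, hp, h⟩ := ht
  exact ⟨s, p, hs, hp, fun n hn => by rw [Trace.restrict, h n hn, Trace.restrict]⟩

/-- The least strict upper bound of the atoms of a formula. -/
def QF.atomBound : QF ℕ → ℕ
  | atom a _ => a + 1
  | neg q | next q => q.atomBound
  | disj q r | untl q r => max q.atomBound r.atomBound

/-- The least strict upper bound of the atoms of a formula. -/
def HFormula.atomBound : HFormula ℕ → ℕ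
  | ex _ φ | all _ φ => φ.atomBound
  | qf q => q.atomBound

theorem QF.sat_restrict {K : ℕ} (q : QF ℕ) (hq : q.atomBound ≤ K) (As : ℕ → Trace ℕ) :
    q.sat (Trace.restrict K ∘ As) ↔ q.sat As := by
  induction q generalizing As with
  | atom a x => simpa [Trace.restrict] using fun _ => show a < K from hq
  | neg q ih => exact not_congr (ih hq As)
  | next q ih => exact ih hq (shiftAsg As 1)
  | disj q r ihq ihr =>
    exact or_congr (ihq (le_of_max_le_left hq) As) (ihr (le_of_max_le_right hq) As)
  | untl q r ihq ihr =>
    exact exists_congr fun j => and_congr (ihr (le_of_max_le_right hq) (shiftAsg As j))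
      (forall₂_congr fun k _ => ihq (le_of_max_le_left hq) (shiftAsg As k))

theorem HFormula.sat_restrict {K : ℕ} (φ : HFormula ℕ) (hφ : φ.atomBound ≤ K) (T : Set (Trace ℕ))
    (As : ℕ → Trace ℕ) :
    φ.sat (Trace.restrict K '' T) (Trace.restrict K ∘ As) ↔ φ.sat T As := by
  induction φ generalizing As with
  | ex x φ ih =>
    simp only [sat, Set.exists_mem_image, ← Function.comp_update, ih hφ]
  | all x φ ih =>
    simp only [sat, Set.forall_mem_image, ← Function.comp_update, ih hφ]
  | qf q => exact q.sat_restrict hφ As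

theorem HFormula.exists_countable_model {φ : HFormula ℕ} {T : Set (Trace ℕ)}
    (hT : ∀ t ∈ T, UltPeriodic t) (h : HModels T φ) :
    ∃ T' : Set (Trace ℕ), T'.Countable ∧ (∀ t ∈ T', UltPeriodic t) ∧ HModels T' φ := by
  refine ⟨Trace.restrict φ.atomBound '' T, ?_,
    Set.forall_mem_image.mpr fun t ht => (hT t ht).restrict _, ?_⟩
  · refine (Trace.countable_ultPeriodic_subset φ.atomBound).mono ?_
    rintro _ ⟨t, ht, rfl⟩
    exact ⟨(hT t ht).restrict _, fun n => Set.inter_subset_right⟩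
  · have hempty : Trace.restrict φ.atomBound ∘ (fun _ _ => ∅) = fun (_ : ℕ) _ => ∅ := by
      funext x n
      simp [Trace.restrict]
    rw [HModels, ← hempty]
    exact (φ.sat_restrict le_rfl T _).mpr h

/-! ### The certificate of a countable model -/

theorem HFormula.two_le_codeWith {AP : Type} (e : AP → ℕ) (φ : HFormula AP) :
    2 ≤ φ.codeWith e := by
  induction φ with
  | ex x φ ih | all x φ ih =>
    exact ih.trans ((Nat.right_le_pair _ _).trans (Nat.right_le_pair _ _))
  | qf q => exact Nat.left_le_pair 2 _

theorem lt_pair_zero_pair {x d : ℕ} (hd : 2 ≤ d) : d < Nat.pair 0 (Nat.pair x d) := by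
  have hle := Nat.right_le_pair x d
  have hpos : 0 < Nat.pair x d := by omega
  rw [Nat.pair, if_pos hpos]
  nlinarith

namespace Certificate

/-- The certificate of the set `T` of traces whose members are enumerated by `f`; indices are
encoded by `e`. -/
noncomputable def ofModel (T : Set (Trace ℕ)) (f : ℕ → Trace ℕ) (e : (ℕ →₀ ℕ) ≃ ℕ) :
    Certificate where
  trace := f
  dom := f ⁻¹' T
  look A := e.symm A
  upd A x t := e ((e.symm A).update x t)
  qfOk c A := ∃ q : QF ℕ, q.codeWith id = c ∧ q.freeVars ⊆ {x | e.symm A x ≠ 0}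
  qfSat c B i := ∃ q : QF ℕ, q.codeWith id = c ∧ q.sat (shiftAsg (fun x => f (e.symm B x)) i)
  hfOk c A := ∃ φ : HFormula ℕ, φ.codeWith id = c ∧ φ.freeVars ⊆ {x | e.symm A x ≠ 0}
  hfSat c B := ∃ φ : HFormula ℕ, φ.codeWith id = c ∧ φ.sat T fun x => f (e.symm B x)

variable {T : Set (Trace ℕ)} {f : ℕ → Trace ℕ} {e : (ℕ →₀ ℕ) ≃ ℕ}

theorem qfSat_ofModel (q : QF ℕ) (B i : ℕ) :
    (ofModel T f e).qfSat (q.codeWith id) B i ↔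
      q.sat (shiftAsg (fun x => f (e.symm B x)) i) := by
  simp [ofModel, (QF.codeWith_injective Function.injective_id).eq_iff]

theorem hfSat_ofModel (φ : HFormula ℕ) (B : ℕ) :
    (ofModel T f e).hfSat (φ.codeWith id) B ↔ φ.sat T fun x => f (e.symm B x) := by
  simp [ofModel, (HFormula.codeWith_injective Function.injective_id).eq_iff]

theorem qfSpec_ofModel (q : QF ℕ) (A : ℕ) (hq : q.freeVars ⊆ {x | e.symm A x ≠ 0}) :
    (ofModel T f e).QFSpec (q.codeWith id) A := by
  have hsat := @qfSat_ofModel T f e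
  cases q with
  | atom a x =>
    refine .inl ⟨a, x, rfl, hq rfl, fun B i => (hsat ..).trans ?_⟩
    simp [ofModel]
  | neg q => exact .inr (.inl ⟨_, rfl, ⟨q, rfl, hq⟩, by simp [hsat]⟩)
  | disj q r =>
    obtain ⟨hq, hr⟩ := Set.union_subset_iff.mp hq
    exact .inr (.inr (.inl ⟨_, _, rfl, ⟨q, rfl, hq⟩, ⟨r, rfl, hr⟩, by simp [hsat]⟩))
  | next q => exact .inr (.inr (.inr (.inl ⟨_, rfl, ⟨q, rfl, hq⟩, by simp [hsat]⟩)))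
  | untl q r =>
    obtain ⟨hq, hr⟩ := Set.union_subset_iff.mp hq
    exact .inr (.inr (.inr (.inr ⟨_, _, rfl, ⟨q, rfl, hq⟩, ⟨r, rfl, hr⟩, by simp [hsat]⟩)))

theorem assignment_upd_ofModel (B x t : ℕ) :
    (fun y => f (e.symm ((ofModel T f e).upd B x t) y)) =
      Function.update (fun y => f (e.symm B y)) x (f t) := by
  funext y
  rcases eq_or_ne y x with rfl | hyx <;> simp [ofModel, *]

theorem freeVars_subset_upd_ofModel {V : Set ℕ} {A x : ℕ}
    (hV : V \ {x} ⊆ {y | e.symm A y ≠ 0}) :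
    V ⊆ {y | e.symm ((ofModel T f e).upd A x 1) y ≠ 0} := by
  intro y hy
  rcases eq_or_ne y x with rfl | hyx
  · simp [ofModel]
  · simpa [ofModel, hyx] using hV ⟨hy, hyx⟩

theorem hfSpec_ofModel (hT : T ⊆ Set.range f) (φ : HFormula ℕ) (A : ℕ)
    (hφ : φ.freeVars ⊆ {x | e.symm A x ≠ 0}) : (ofModel T f e).HFSpec (φ.codeWith id) A := by
  have hsat := @hfSat_ofModel T f e
  cases φ with
  | ex x φ =>
    refine .inl ⟨x, _, rfl, lt_pair_zero_pair (φ.two_le_codeWith id),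
      ⟨φ, rfl, freeVars_subset_upd_ofModel hφ⟩, fun B => ?_⟩
    simp only [hsat, assignment_upd_ofModel, HFormula.sat]
    constructor
    · rintro ⟨_, ht, h⟩
      obtain ⟨t, rfl⟩ := hT ht
      exact ⟨t, ht, h⟩
    · exact fun ⟨t, ht, h⟩ => ⟨f t, ht, h⟩
  | all x φ =>
    refine .inr (.inl ⟨x, _, rfl, lt_pair_succ_pair_right 0 x _,
      ⟨φ, rfl, freeVars_subset_upd_ofModel hφ⟩, fun B => ?_⟩)
    simp only [hsat, assignment_upd_ofModel, HFormula.sat]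
    constructor
    · exact fun h t ht => h (f t) ht
    · intro h _ ht
      obtain ⟨t, rfl⟩ := hT ht
      exact h t ht
  | qf q =>
    refine .inr (.inr ⟨_, rfl, ⟨q, rfl, hφ⟩, fun B => ?_⟩)
    simp [hsat, qfSat_ofModel, HFormula.sat]

theorem valid_ofModel (hf : f 0 = fun _ => ∅) (hT : T ⊆ Set.range f)
    (hup : ∀ t ∈ T, UltPeriodic t) {φ : HFormula ℕ} (hφ : φ.IsSentence) (hmodel : HModels T φ) :
    (ofModel T f e).Valid (φ.codeWith id) where
  trace_zero := hf
  ultPeriodic t ht := hup (f t) ht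
  look_upd A x t := by simp [ofModel]
  qf := by
    rintro _ A ⟨q, rfl, hq⟩
    exact qfSpec_ofModel q A hq
  hf := by
    rintro _ A ⟨φ, rfl, hφ⟩
    exact hfSpec_ofModel hT φ A hφ
  start := by
    refine ⟨e 0, by simp [ofModel], ⟨φ, rfl, hφ ▸ Set.empty_subset _⟩, ?_⟩
    simpa [hfSat_ofModel, hf, HModels] using hmodel

end Certificate

theorem mem_upSatCodes_iff_exists_valid {n : ℕ} :
    n ∈ UPSatCodes ↔ ∃ C : Certificate, C.Valid n := by
  constructor
  · rintro ⟨φ, hφ, rfl, T, hT, hmodel⟩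
    obtain ⟨T', hcount, hT', hmodel'⟩ := HFormula.exists_countable_model hT hmodel
    obtain ⟨g, hg⟩ := Set.countable_iff_exists_subset_range.mp hcount
    obtain ⟨e⟩ : Nonempty ((ℕ →₀ ℕ) ≃ ℕ) := nonempty_equiv_of_countable
    let f : ℕ → Trace ℕ
      | 0 => fun _ => ∅
      | k + 1 => g k
    have hf : T' ⊆ Set.range f := hg.trans (Set.range_subset_iff.mpr fun k => ⟨k + 1, rfl⟩)
    exact ⟨_, Certificate.valid_ofModel (e := e) rfl hf hT' hφ hmodel'⟩
  · rintro ⟨C, hC⟩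
    exact hC.mem_upSatCodes

/-! ### Arithmetization of certificates -/

/-- A polynomial pairing function; unlike `Nat.pair`, it is given by a term of arithmetic. -/
def sqPair (a b : ℕ) : ℕ := (a + b) * (a + b) + a

theorem sqPair_injective : Function.Injective fun p : ℕ × ℕ => sqPair p.1 p.2 := by
  rintro ⟨a, b⟩ ⟨c, d⟩ h
  simp only [sqPair] at h
  have hsum : a + b = c + d := by
    rcases lt_trichotomy (a + b) (c + d) with hlt | heq | hlt
    · nlinarith
    · exact heq
    · nlinarith
  rw [hsum] at h
  ext <;> lia

namespace ATerm

/-- The closed term denoting `n`. -/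
def numeral : ℕ → ATerm
  | 0 => zero
  | n + 1 => add (numeral n) one

/-- The binary function coded by the function variable `f` along `sqPair`. -/
def app₂ (f : ℕ) (a b : ATerm) : ATerm := app f (add (mul (add a b) (add a b)) a)

/-- The ternary function coded by the function variable `f` along `sqPair`. -/
def app₃ (f : ℕ) (a b c : ATerm) : ATerm := app₂ f (add (mul (add a b) (add a b)) a) c

variable (v : ℕ → ℕ) (F : ℕ → ℕ → ℕ)

@[simp]
theorem eval_var (x : ℕ) : (var x).eval v F = v x := rfl

@[simp]
theorem eval_zero : zero.eval v F = 0 := rfl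

@[simp]
theorem eval_one : one.eval v F = 1 := rfl

@[simp]
theorem eval_add (s t : ATerm) : (add s t).eval v F = s.eval v F + t.eval v F := rfl

@[simp]
theorem eval_numeral (n : ℕ) : (numeral n).eval v F = n := by
  induction n with
  | zero => rfl
  | succ n ih => simp [numeral, ih]

theorem eval_app₂ (f : ℕ) (a b : ATerm) :
    (app₂ f a b).eval v F = F f (sqPair (a.eval v F) (b.eval v F)) := rfl

end ATerm

namespace AForm

/-- Conjunction. -/
def and (φ ψ : AForm) : AForm := neg (disj (neg φ) (neg ψ))

/-- Implication. -/
def imp (φ ψ : AForm) : AForm := disj (neg φ) ψ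

/-- Equivalence. -/
def iff (φ ψ : AForm) : AForm := and (imp φ ψ) (imp ψ φ)

variable (φ ψ : AForm) (s t : ATerm) (x : ℕ) (v : ℕ → ℕ) (F : ℕ → ℕ → ℕ)

@[simp]
theorem sat_eq : (eq s t).sat v F ↔ s.eval v F = t.eval v F := Iff.rfl

@[simp]
theorem sat_lt : (lt s t).sat v F ↔ s.eval v F < t.eval v F := Iff.rfl

@[simp]
theorem sat_neg : φ.neg.sat v F ↔ ¬ φ.sat v F := Iff.rfl

@[simp]
theorem sat_disj : (disj φ ψ).sat v F ↔ φ.sat v F ∨ ψ.sat v F := Iff.rfl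

@[simp]
theorem sat_exN : (exN x φ).sat v F ↔ ∃ n, φ.sat (Function.update v x n) F := Iff.rfl

@[simp]
theorem sat_allN : (allN x φ).sat v F ↔ ∀ n, φ.sat (Function.update v x n) F := Iff.rfl

@[simp]
theorem sat_and : (and φ ψ).sat v F ↔ φ.sat v F ∧ ψ.sat v F := by simp [and]

@[simp]
theorem sat_imp : (imp φ ψ).sat v F ↔ (φ.sat v F → ψ.sat v F) := by simp [imp, imp_iff_not_or]

@[simp]
theorem sat_iff : (iff φ ψ).sat v F ↔ (φ.sat v F ↔ ψ.sat v F) := by simp [iff, iff_def]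

end AForm

namespace Certificate

/-- The certificate coded by the function variables `1, …, 8`. The variable `0` is reserved for the
pairing table `IsPairTable`. -/
def ofFun (F : ℕ → ℕ → ℕ) : Certificate where
  trace t i := {a | F 1 (sqPair (sqPair t i) a) = 1}
  dom := {t | F 2 t = 1}
  look A x := F 3 (sqPair A x)
  upd A x t := F 4 (sqPair (sqPair A x) t)
  qfOk c A := F 5 (sqPair c A) = 1
  qfSat c B i := F 6 (sqPair (sqPair c B) i) = 1
  hfOk c A := F 7 (sqPair c A) = 1
  hfSat c B := F 8 (sqPair c B) = 1

/-- The function variable `0` tabulates `Nat.pair`, which makes the codes of formulas values of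
terms. -/
def IsPairTable (F : ℕ → ℕ → ℕ) : Prop := ∀ a b, F 0 (sqPair a b) = Nat.pair a b

open Classical in
theorem exists_ofFun_eq (C : Certificate) : ∃ F, IsPairTable F ∧ ofFun F = C := by
  obtain ⟨u, hu⟩ := sqPair_injective.hasLeftInverse
  have hu₂ (a b : ℕ) : u (sqPair a b) = (a, b) := hu (a, b)
  let F : ℕ → ℕ → ℕ
    | 0, m => Nat.pair (u m).1 (u m).2
    | 1, m => if (u m).2 ∈ C.trace (u (u m).1).1 (u (u m).1).2 then 1 else 0
    | 2, m => if m ∈ C.dom then 1 else 0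
    | 3, m => C.look (u m).1 (u m).2
    | 4, m => C.upd (u (u m).1).1 (u (u m).1).2 (u m).2
    | 5, m => if C.qfOk (u m).1 (u m).2 then 1 else 0
    | 6, m => if C.qfSat (u (u m).1).1 (u (u m).1).2 (u m).2 then 1 else 0
    | 7, m => if C.hfOk (u m).1 (u m).2 then 1 else 0
    | _, m => if C.hfSat (u m).1 (u m).2 then 1 else 0
  refine ⟨F, fun a b => by simp [F, hu₂], ?_⟩
  ext <;> simp [ofFun, F, hu₂]

open ATerm AForm

/-- The term `Nat.pair a b`, by the pairing table. -/
def pairTerm (a b : ATerm) : ATerm := app₂ 0 a b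

/-- The term `look A x` of `ofFun F`. -/
def lookTerm (A x : ATerm) : ATerm := app₂ 3 A x

/-- The term `upd A x t` of `ofFun F`. -/
def updTerm (A x t : ATerm) : ATerm := app₃ 4 A x t

/-- The formula `a ∈ trace t i` about `ofFun F`. -/
def traceForm (t i a : ATerm) : AForm := eq (app₃ 1 t i a) one

/-- The formula `t ∈ dom` about `ofFun F`. -/
def domForm (t : ATerm) : AForm := eq (app 2 t) one

/-- The formula `qfOk c A` about `ofFun F`. -/
def qfOkForm (c A : ATerm) : AForm := eq (app₂ 5 c A) one

/-- The formula `qfSat c B i` about `ofFun F`. -/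
def qfSatForm (c B i : ATerm) : AForm := eq (app₃ 6 c B i) one

/-- The formula `hfOk c A` about `ofFun F`. -/
def hfOkForm (c A : ATerm) : AForm := eq (app₂ 7 c A) one

/-- The formula `hfSat c B` about `ofFun F`. -/
def hfSatForm (c B : ATerm) : AForm := eq (app₂ 8 c B) one

section Symbols

variable (a b c A B x t i : ATerm) (v : ℕ → ℕ) (F : ℕ → ℕ → ℕ)

theorem eval_pairTerm (hF : IsPairTable F) :
    (pairTerm a b).eval v F = Nat.pair (a.eval v F) (b.eval v F) := hF _ _

@[simp]
theorem eval_lookTerm :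
    (lookTerm A x).eval v F = (ofFun F).look (A.eval v F) (x.eval v F) := rfl

@[simp]
theorem eval_updTerm : (updTerm A x t).eval v F =
    (ofFun F).upd (A.eval v F) (x.eval v F) (t.eval v F) := rfl

@[simp]
theorem sat_traceForm : (traceForm t i a).sat v F ↔
    a.eval v F ∈ (ofFun F).trace (t.eval v F) (i.eval v F) := Iff.rfl

@[simp]
theorem sat_domForm : (domForm t).sat v F ↔ t.eval v F ∈ (ofFun F).dom := Iff.rfl

@[simp]
theorem sat_qfOkForm :
    (qfOkForm c A).sat v F ↔ (ofFun F).qfOk (c.eval v F) (A.eval v F) := Iff.rfl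

@[simp]
theorem sat_qfSatForm : (qfSatForm c B i).sat v F ↔
    (ofFun F).qfSat (c.eval v F) (B.eval v F) (i.eval v F) := Iff.rfl

@[simp]
theorem sat_hfOkForm :
    (hfOkForm c A).sat v F ↔ (ofFun F).hfOk (c.eval v F) (A.eval v F) := Iff.rfl

@[simp]
theorem sat_hfSatForm :
    (hfSatForm c B).sat v F ↔ (ofFun F).hfSat (c.eval v F) (B.eval v F) := Iff.rfl

end Symbols

/-- `F 0` is a pairing table, by cases as in the definition of `Nat.pair`. -/
def pairTableForm : AForm :=
  allN 1 <| allN 2 <| and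
    (imp (lt (var 1) (var 2)) <|
      eq (pairTerm (var 1) (var 2)) (add (mul (var 2) (var 2)) (var 1)))
    (imp (neg (lt (var 1) (var 2))) <|
      eq (pairTerm (var 1) (var 2)) (add (add (mul (var 1) (var 1)) (var 1)) (var 2)))

theorem sat_pairTableForm (v : ℕ → ℕ) (F : ℕ → ℕ → ℕ) :
    pairTableForm.sat v F ↔ IsPairTable F := by
  refine forall₂_congr fun a b => ?_
  by_cases hab : a < b <;> simp [Nat.pair, hab, pairTerm, eval_app₂, ATerm.eval]

/-- `QFSpec`, with `c` and `A` given by the variables `1` and `2`. -/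
def qfSpecForm : AForm :=
  disj (exN 3 <| exN 4 <|
      and (eq (var 1) (pairTerm (numeral 0) (pairTerm (var 3) (var 4)))) <|
      and (neg (eq (lookTerm (var 2) (var 4)) zero)) <|
      allN 5 <| allN 6 <| iff (qfSatForm (var 1) (var 5) (var 6)) <|
        traceForm (lookTerm (var 5) (var 4)) (var 6) (var 3)) <|
  disj (exN 3 <|
      and (eq (var 1) (pairTerm (numeral 1) (var 3))) <|
      and (qfOkForm (var 3) (var 2)) <|
      allN 5 <| allN 6 <| iff (qfSatForm (var 1) (var 5) (var 6)) <|
        neg (qfSatForm (var 3) (var 5) (var 6))) <|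
  disj (exN 3 <| exN 4 <|
      and (eq (var 1) (pairTerm (numeral 2) (pairTerm (var 3) (var 4)))) <|
      and (qfOkForm (var 3) (var 2)) <| and (qfOkForm (var 4) (var 2)) <|
      allN 5 <| allN 6 <| iff (qfSatForm (var 1) (var 5) (var 6)) <|
        disj (qfSatForm (var 3) (var 5) (var 6)) (qfSatForm (var 4) (var 5) (var 6))) <|
  disj (exN 3 <|
      and (eq (var 1) (pairTerm (numeral 3) (var 3))) <|
      and (qfOkForm (var 3) (var 2)) <|
      allN 5 <| allN 6 <| iff (qfSatForm (var 1) (var 5) (var 6)) <|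
        qfSatForm (var 3) (var 5) (add (var 6) one)) <|
  exN 3 <| exN 4 <|
    and (eq (var 1) (pairTerm (numeral 4) (pairTerm (var 3) (var 4)))) <|
    and (qfOkForm (var 3) (var 2)) <| and (qfOkForm (var 4) (var 2)) <|
    allN 5 <| allN 6 <| iff (qfSatForm (var 1) (var 5) (var 6)) <|
      exN 7 <| and (qfSatForm (var 4) (var 5) (add (var 6) (var 7))) <|
        allN 8 <| imp (lt (var 8) (var 7)) (qfSatForm (var 3) (var 5) (add (var 6) (var 8)))

theorem sat_qfSpecForm {F : ℕ → ℕ → ℕ} (hF : IsPairTable F) (v : ℕ → ℕ) :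
    qfSpecForm.sat v F ↔ (ofFun F).QFSpec (v 1) (v 2) := by
  simp [qfSpecForm, QFSpec, eval_pairTerm, hF]

/-- `HFSpec`, with `c` and `A` given by the variables `1` and `2`. -/
def hfSpecForm : AForm :=
  disj (exN 3 <| exN 4 <|
      and (eq (var 1) (pairTerm (numeral 0) (pairTerm (var 3) (var 4)))) <|
      and (lt (var 4) (var 1)) <| and (hfOkForm (var 4) (updTerm (var 2) (var 3) one)) <|
      allN 5 <| iff (hfSatForm (var 1) (var 5)) <|
        exN 6 <| and (domForm (var 6)) <|
          hfSatForm (var 4) (updTerm (var 5) (var 3) (var 6))) <|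
  disj (exN 3 <| exN 4 <|
      and (eq (var 1) (pairTerm (numeral 1) (pairTerm (var 3) (var 4)))) <|
      and (lt (var 4) (var 1)) <| and (hfOkForm (var 4) (updTerm (var 2) (var 3) one)) <|
      allN 5 <| iff (hfSatForm (var 1) (var 5)) <|
        allN 6 <| imp (domForm (var 6)) <|
          hfSatForm (var 4) (updTerm (var 5) (var 3) (var 6))) <|
  exN 3 <|
    and (eq (var 1) (pairTerm (numeral 2) (var 3))) <|
    and (qfOkForm (var 3) (var 2)) <|
    allN 5 <| iff (hfSatForm (var 1) (var 5)) (qfSatForm (var 3) (var 5) zero)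

theorem sat_hfSpecForm {F : ℕ → ℕ → ℕ} (hF : IsPairTable F) (v : ℕ → ℕ) :
    hfSpecForm.sat v F ↔ (ofFun F).HFSpec (v 1) (v 2) := by
  simp [hfSpecForm, HFSpec, eval_pairTerm, hF]

/-- All traces with index in `dom` are ultimately periodic. -/
def ultPeriodicForm : AForm :=
  allN 1 <| imp (domForm (var 1)) <| exN 2 <| exN 3 <|
    and (lt zero (var 2)) <| and (lt zero (var 3)) <|
    allN 4 <| imp (neg (lt (var 4) (var 2))) <|
    allN 5 <| iff (traceForm (var 1) (add (var 4) (var 3)) (var 5))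
      (traceForm (var 1) (var 4) (var 5))

theorem sat_ultPeriodicForm (v : ℕ → ℕ) (F : ℕ → ℕ → ℕ) :
    ultPeriodicForm.sat v F ↔ ∀ t, t ∈ (ofFun F).dom → UltPeriodic ((ofFun F).trace t) := by
  simp [ultPeriodicForm, UltPeriodic, Set.ext_iff, Nat.one_le_iff_ne_zero, Nat.pos_iff_ne_zero]

/-- `upd` updates the functions indexed by `look`. -/
def lookUpdForm : AForm :=
  allN 1 <| allN 2 <| allN 3 <| allN 4 <| and
    (imp (eq (var 4) (var 2)) <|
      eq (lookTerm (updTerm (var 1) (var 2) (var 3)) (var 4)) (var 3))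
    (imp (neg (eq (var 4) (var 2))) <|
      eq (lookTerm (updTerm (var 1) (var 2) (var 3)) (var 4)) (lookTerm (var 1) (var 4)))

theorem sat_lookUpdForm (v : ℕ → ℕ) (F : ℕ → ℕ → ℕ) :
    lookUpdForm.sat v F ↔ ∀ A x t,
      (ofFun F).look ((ofFun F).upd A x t) = Function.update ((ofFun F).look A) x t := by
  simp only [funext_iff]
  refine forall₄_congr fun A x t y => ?_
  by_cases hyx : y = x <;> simp [hyx]

theorem valid_iff (C : Certificate) (n : ℕ) : C.Valid n ↔
    C.trace 0 = (fun _ => ∅) ∧ (∀ t, t ∈ C.dom → UltPeriodic (C.trace t)) ∧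
    (∀ A x t, C.look (C.upd A x t) = Function.update (C.look A) x t) ∧
    (∀ c A, C.qfOk c A → C.QFSpec c A) ∧ (∀ c A, C.hfOk c A → C.HFSpec c A) ∧
    ∃ A, (∀ x, C.look A x = 0) ∧ C.hfOk n A ∧ C.hfSat n A :=
  ⟨fun ⟨htrace, hup, hlook, hqf, hhf, hstart⟩ => ⟨htrace, hup, hlook, hqf, hhf, hstart⟩,
    fun ⟨htrace, hup, hlook, hqf, hhf, hstart⟩ => ⟨htrace, hup, hlook, hqf, hhf, hstart⟩⟩

/-- `Valid`, with `n` given by the variable `0`. -/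
def validForm : AForm :=
  and (allN 1 <| allN 2 <| neg (traceForm zero (var 1) (var 2))) <|
  and ultPeriodicForm <|
  and lookUpdForm <|
  and (allN 1 <| allN 2 <| imp (qfOkForm (var 1) (var 2)) qfSpecForm) <|
  and (allN 1 <| allN 2 <| imp (hfOkForm (var 1) (var 2)) hfSpecForm) <|
  exN 1 <| and (allN 2 <| eq (lookTerm (var 1) (var 2)) zero) <|
    and (hfOkForm (var 0) (var 1)) (hfSatForm (var 0) (var 1))

theorem sat_validForm {F : ℕ → ℕ → ℕ} (hF : IsPairTable F) (v : ℕ → ℕ) :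
    validForm.sat v F ↔ (ofFun F).Valid (v 0) := by
  have htrace : (ofFun F).trace 0 = (fun _ => ∅) ↔ ∀ i a, a ∉ (ofFun F).trace 0 i := by
    simp [funext_iff, Set.eq_empty_iff_forall_notMem]
  simp [validForm, valid_iff, htrace, sat_ultPeriodicForm, sat_lookUpdForm, sat_qfSpecForm,
    sat_hfSpecForm, hF]

end Certificate

theorem sigma11_upSatCodes : Sigma11 UPSatCodes := by
  refine ⟨.and Certificate.pairTableForm Certificate.validForm, fun n => ?_⟩
  rw [mem_upSatCodes_iff_exists_valid]
  constructor
  · rintro ⟨C, hC⟩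
    obtain ⟨F, hF, rfl⟩ := C.exists_ofFun_eq
    exact ⟨F, by simpa [Certificate.sat_pairTableForm, Certificate.sat_validForm, hF] using hC⟩
  · rintro ⟨F, h⟩
    rw [AForm.sat_and, Certificate.sat_pairTableForm] at h
    exact ⟨.ofFun F, (Certificate.sat_validForm h.1 _).mp h.2⟩

/-- **HyperLTL satisfiability restricted to sets of ultimately periodic traces is
Σ¹₁-complete**: the set of codes is Σ¹₁ and every Σ¹₁ set many-one reduces to it
via a total computable function. -/
theorem hyperltl_up_sat_Sigma11_complete :
    Sigma11 UPSatCodes ∧ ∀ N : Set ℕ, Sigma11 N → ManyOneRed N UPSatCodes := by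
  exact ⟨sigma11_upSatCodes, fun _ => manyOneRed_upSatCodes⟩
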